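/- arXiv:2111.02179 — 2 statements merged into one kernel-verified Lean document; each statement's English description precedes it below -/
import Mathlib

section
/- Let (A, φ) be a noncommutative probability space with monotone cumulants {h_n}. Then for every n ≥ 1 and all a_1,…,a_n ∈ A, h_n(a_1,…,a_n) = Σ_{π∈NC(n)} α(π) · φ_π(a_1,…,a_n), where for each π ∈ NC(n) the coefficient is α(π) = Σ_{t ∈ ST(n), π(t) = π} ω(sk(t)). -/
open scoped BigOperators

/-- Planar rooted trees (rose trees). -/
inductive PTree : Type
  | node : List PTree → PTree

namespace PTree

/-- The single-vertex tree (a leaf). -/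
abbrev leaf : PTree := .node []

/-- Subtree at a given path from the root (entries select children). -/
def subtreeAt : List ℕ → PTree → Option PTree
  | [], t => some t
  | i :: p, node cs => (cs[i]?).bind (subtreeAt p)

/-- `p` is (the path of) a vertex of `t`. -/
def IsVertex (t : PTree) (p : List ℕ) : Prop := (subtreeAt p t).isSome

/-- `p` is a leaf of `t`. -/
def IsLeafAt (t : PTree) (p : List ℕ) : Prop := subtreeAt p t = some leaf

/-- `p` is an internal (non-leaf) vertex of `t`. -/
def IsInternalAt (t : PTree) (p : List ℕ) : Prop :=
  ∃ cs, subtreeAt p t = some (node cs) ∧ cs ≠ []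

/-- Schröder trees: every internal vertex has at least two children. -/
inductive IsSchroder : PTree → Prop
  | leaf : IsSchroder (node [])
  | node (cs : List PTree) : 2 ≤ cs.length → (∀ c ∈ cs, IsSchroder c) → IsSchroder (node cs)

/-- Number of leaves of a tree. -/
noncomputable def numLeaves (t : PTree) : ℕ := Nat.card {p : List ℕ // IsLeafAt t p}

/-- Number of sectors between consecutive leaves. -/
noncomputable def numSectors (t : PTree) : ℕ := numLeaves t - 1

/-- Number of internal vertices. -/
noncomputable def numInternal (t : PTree) : ℕ := Nat.card {p : List ℕ // IsInternalAt t p}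

/-- The set of Schröder trees with `n+1` leaves. -/
def ST (n : ℕ) : Set PTree := {t | IsSchroder t ∧ numLeaves t = n + 1}

/-- Number of surjective strictly order-preserving maps from the poset of internal
vertices of `t` (i.e. the vertex poset of the skeleton `sk(t)`, with the root minimal,
the order being the ancestor/prefix order) onto `{1, …, k}`. This is `ω_k(sk(t))`. -/
noncomputable def omegaSkK (t : PTree) (k : ℕ) : ℕ :=
  Nat.card {f : {p : List ℕ // IsInternalAt t p} → Fin k //
    Function.Surjective f ∧ ∀ v w, v.1 <+: w.1 → v ≠ w → f v < f w}

/-- The Murua coefficient `ω(sk(t))` of the skeleton of `t`. -/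
noncomputable def omegaSk (t : PTree) : ℂ :=
  ∑ k ∈ Finset.Icc 1 (numInternal t), ((-1 : ℂ) ^ (k + 1) / (k : ℂ)) * (omegaSkK t k : ℂ)

/-- The subtree of `t` at path `p` (junk value: a leaf). -/
noncomputable def subtree! (t : PTree) (p : List ℕ) : PTree := (subtreeAt p t).getD leaf

/-- Number of leaves of `t` strictly to the left of the subtree at `p`. -/
noncomputable def leavesBefore (t : PTree) (p : List ℕ) : ℕ :=
  Nat.card {q : List ℕ // IsLeafAt t q ∧ List.Lex (· < ·) q p ∧ ¬ p <+: q}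

/-- Sector number `i` (0-indexed: the sector between the `(i+1)`-st and `(i+2)`-nd leaves of `t`)
lies strictly inside the subtree of `t` rooted at `p`. -/
def SectorIn (t : PTree) (p : List ℕ) (i : ℕ) : Prop :=
  leavesBefore t p ≤ i ∧ i + 2 ≤ leavesBefore t p + numLeaves (subtree! t p)

/-- The internal vertex `v` of `t` owns sector `i`: the sector lies in the corolla at `v`,
i.e. inside the subtree at `v` but not inside the subtree at any strictly deeper vertex. -/
def OwnsSector (t : PTree) (v : List ℕ) (i : ℕ) : Prop :=
  IsInternalAt t v ∧ SectorIn t v i ∧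
    ∀ w, IsInternalAt t w → v <+: w → w ≠ v → ¬ SectorIn t w i

/-- Sectors `i` and `j` belong to the same block of the noncrossing partition `π(t)`. -/
def SameOwner (t : PTree) (i j : ℕ) : Prop := ∃ v, OwnsSector t v i ∧ OwnsSector t v j

open Classical in
/-- `φ_{π(t)}(a_1,…,a_n)`: the product over the blocks of the noncrossing partition `π(t)`
(one block per internal vertex `v`, consisting of the sectors owned by `v`) of `φ` applied to
the ordered product of the corresponding letters of `w`. -/
noncomputable def phiPi {A : Type*} [Ring A] (φ : A → ℂ) (t : PTree) (w : List A) : ℂ :=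
  ∏ᶠ v ∈ {v : List ℕ | IsInternalAt t v},
    φ ((((List.range w.length).filter fun i => OwnsSector t v i).map fun i => w.getD i 0).prod)

/-- A corolla: a root whose (at least two) children are all leaves. -/
def corolla (m : ℕ) : PTree := node (List.replicate m leaf)

/-- `t` is a corolla. -/
def IsCorolla (t : PTree) : Prop := ∃ m, 2 ≤ m ∧ t = corolla m

/-- Graft a tree `s` onto the leftmost leaf of `t`. -/
def graftLeftmost : PTree → PTree → PTree
  | node [], s => s
  | node (c :: cs), s => node (graftLeftmost c s :: cs)

/-- Trees obtained from the single-vertex tree by repeatedly grafting a corolla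
onto the leftmost leaf. -/
inductive IsBST : PTree → Prop
  | single : IsBST leaf
  | graft (t : PTree) (m : ℕ) : IsBST t → 2 ≤ m → IsBST (graftLeftmost t (corolla m))

/-- Schröder trees whose leftmost child of the root is a leaf. -/
def IsPST (t : PTree) : Prop := ∃ cs, t = node (leaf :: cs)

end PTree
section Partitions

open scoped BigOperators

/-- Set partitions of `[n] = {1,…,n}`, modeled as finpartitions of `Fin n`. -/
abbrev NPart (n : ℕ) := Finpartition (Finset.univ : Finset (Fin n))

/-- Noncrossing partitions: there are no `a < b < c < d` with `a, c` in one block and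
`b, d` in a different block. -/
def IsNoncrossing {n : ℕ} (π : NPart n) : Prop :=
  ∀ a b c d : Fin n, a < b → b < c → c < d →
    ∀ V ∈ π.parts, ∀ W ∈ π.parts, a ∈ V → c ∈ V → b ∈ W → d ∈ W → V = W

/-- Interval partitions: every block is an interval of consecutive elements. -/
def IsIntervalPart {n : ℕ} (π : NPart n) : Prop :=
  ∀ V ∈ π.parts, ∀ x ∈ V, ∀ y ∈ V, ∀ z : Fin n, x ≤ z → z ≤ y → z ∈ V

/-- Irreducible noncrossing partitions: `1` and `n` lie in the same block. -/
def IsIrreducibleNC {n : ℕ} (π : NPart n) : Prop :=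
  ∃ V ∈ π.parts, (∀ i : Fin n, i.val = 0 → i ∈ V) ∧ (∀ i : Fin n, i.val = n - 1 → i ∈ V)

/-- `W` is nested in `V`: every element of `W` lies in the interval `[min V, max V]`. -/
def NestedIn {n : ℕ} (W V : Finset (Fin n)) : Prop :=
  ∀ w ∈ W, (∃ a ∈ V, a ≤ w) ∧ (∃ b ∈ V, w ≤ b)

open Classical in
/-- The forest factorial `t(π)!` of the forest of nestings of `π`: the product, over all
blocks `V`, of the number of blocks nested in `V` (the size of the subtree rooted at `V`). -/
noncomputable def forestFactorial {n : ℕ} (π : NPart n) : ℕ :=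
  ∏ V ∈ π.parts, (π.parts.filter fun W => NestedIn W V).card

/-- `f_π(a_1,…,a_n)`: the product over the blocks `V = {i_1 < … < i_s}` of `π` of
`f(a_{i_1},…,a_{i_s})`, for a family of multilinear functionals encoded as `f : List A → ℂ`. -/
noncomputable def blockApply {A : Type*} {n : ℕ} (f : List A → ℂ) (a : Fin n → A)
    (π : NPart n) : ℂ :=
  ∏ V ∈ π.parts, f ((V.sort (· ≤ ·)).map a)

/-- `φ_π(a_1,…,a_n)` for the moment functionals `φ_m(a_1,…,a_m) = φ(a_1 ⋯ a_m)`. -/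
noncomputable def momApply {A : Type*} [Ring A] {n : ℕ} (φ : A → ℂ) (a : Fin n → A)
    (π : NPart n) : ℂ :=
  blockApply (fun l => φ l.prod) a π

/-- `ω_k(t(π))` for the nesting poset of the blocks of `π` (for irreducible `π`, this is
the vertex poset of the tree of nestings, rooted at the outermost block): the number of
surjective strictly order-preserving maps onto `{1,…,k}`. -/
noncomputable def omegaNestK {n : ℕ} (π : NPart n) (k : ℕ) : ℕ :=
  Nat.card {f : {V // V ∈ π.parts} → Fin k // Function.Surjective f ∧
    ∀ V W : {V // V ∈ π.parts}, NestedIn W.1 V.1 → V ≠ W → f V < f W}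

/-- The Murua coefficient `ω(t(π))` of the tree (forest) of nestings of `π`. -/
noncomputable def omegaNest {n : ℕ} (π : NPart n) : ℂ :=
  ∑ k ∈ Finset.Icc 1 π.parts.card, ((-1 : ℂ) ^ (k + 1) / (k : ℂ)) * (omegaNestK π k : ℂ)

/-- The noncrossing partition `π(t)` associated to a Schröder tree `t ∈ ST(n)` equals `π`:
two sectors lie in the same block of `π(t)` (i.e. have the same owning internal vertex)
iff they lie in the same block of `π`. -/
def TreePartEq {n : ℕ} (t : PTree) (π : NPart n) : Prop :=
  ∀ i j : Fin n, PTree.SameOwner t i.val j.val ↔ ∃ V ∈ π.parts, i ∈ V ∧ j ∈ V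

/-- The moment–cumulant relation defining the monotone cumulants `h`. -/
def MonotoneMC {A : Type*} [Ring A] (φ : A → ℂ) (h : List A → ℂ) : Prop :=
  ∀ (m : ℕ), 1 ≤ m → ∀ a : Fin m → A,
    φ (List.ofFn a).prod =
      ∑ᶠ π ∈ {π : NPart m | IsNoncrossing π}, (forestFactorial π : ℂ)⁻¹ * blockApply h a π

/-- The moment–cumulant relation defining the free cumulants `r`. -/
def FreeMC {A : Type*} [Ring A] (φ : A → ℂ) (r : List A → ℂ) : Prop :=
  ∀ (m : ℕ), 1 ≤ m → ∀ a : Fin m → A,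
    φ (List.ofFn a).prod = ∑ᶠ π ∈ {π : NPart m | IsNoncrossing π}, blockApply r a π

/-- The moment–cumulant relation defining the Boolean cumulants `b`. -/
def BooleanMC {A : Type*} [Ring A] (φ : A → ℂ) (b : List A → ℂ) : Prop :=
  ∀ (m : ℕ), 1 ≤ m → ∀ a : Fin m → A,
    φ (List.ofFn a).prod = ∑ᶠ π ∈ {π : NPart m | IsIntervalPart π}, blockApply b a π

end Partitions

namespace MonotoneNC

open Polynomial Finset

section PartitionPolynomials

/-- No element of `B` lies strictly between two elements of `V`. -/
def Unsplit (V B : Finset ℕ) : Prop :=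
  ∀ x ∈ V, ∀ y ∈ V, ∀ b ∈ B, x < b → ¬ b < y

/-- `W` lies in the convex hull of `V`. -/
def Nested (W V : Finset ℕ) : Prop :=
  ∀ w ∈ W, (∃ a ∈ V, a ≤ w) ∧ (∃ b ∈ V, w ≤ b)

/-- `π` is a noncrossing partition of `Y` none of whose blocks is split by an element of `B`. -/
structure IsNCPartition (Y B : Finset ℕ) (π : Finset (Finset ℕ)) : Prop where
  nonempty : ∀ V ∈ π, V.Nonempty
  subset : ∀ V ∈ π, V ⊆ Y
  unsplit : ∀ V ∈ π, Unsplit V B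
  cover : ∀ x ∈ Y, ∃ V ∈ π, x ∈ V
  disjoint : ∀ V ∈ π, ∀ W ∈ π, V ≠ W → Disjoint V W
  noncrossing : ∀ V ∈ π, ∀ W ∈ π, V ≠ W → Unsplit V W ∨ Unsplit W V

open Classical in
/-- The noncrossing partitions of `Y` compatible with the barriers `B`. -/
noncomputable def ncPartitions (Y B : Finset ℕ) : Finset (Finset (Finset ℕ)) :=
  Y.powerset.powerset.filter (IsNCPartition Y B)

open Classical in
/-- The number of blocks of `π` nested in `V`. -/
noncomputable def nestCount (π : Finset (Finset ℕ)) (V : Finset ℕ) : ℕ :=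
  (π.filter fun W => Nested W V).card

/-- The factorial of the forest of nestings of `π`. -/
noncomputable def nestFactorial (π : Finset (Finset ℕ)) : ℕ :=
  ∏ V ∈ π, nestCount π V

/-- The generating polynomial `∑ X ^ |π| / t(π)! * h_π` of compatible noncrossing partitions. -/
noncomputable def ncPoly (h : Finset ℕ → ℂ) (Y B : Finset ℕ) : ℂ[X] :=
  ∑ π ∈ ncPartitions Y B, C ((nestFactorial π : ℂ)⁻¹ * ∏ V ∈ π, h V) * X ^ π.card

open Classical in
/-- The blocks of `π` that do not split another block. -/
noncomputable def outerBlocks (π : Finset (Finset ℕ)) : Finset (Finset ℕ) :=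
  π.filter fun V => ∀ W ∈ π, W ≠ V → Unsplit W V

open Classical in
/-- The possible outer blocks of noncrossing partitions of `Y` with barriers `B`. -/
noncomputable def unsplitSubsets (Y B : Finset ℕ) : Finset (Finset ℕ) :=
  Y.powerset.filter fun V => V.Nonempty ∧ Unsplit V B

lemma mem_ncPartitions {Y B : Finset ℕ} {π : Finset (Finset ℕ)} :
    π ∈ ncPartitions Y B ↔ IsNCPartition Y B π := by
  simp only [ncPartitions, mem_filter, mem_powerset, and_iff_right_iff_imp]
  intro h V hV
  exact mem_powerset.2 (h.subset V hV)

lemma mem_unsplitSubsets {Y B V : Finset ℕ} :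
    V ∈ unsplitSubsets Y B ↔ V ⊆ Y ∧ V.Nonempty ∧ Unsplit V B := by
  simp [unsplitSubsets]

lemma mem_outerBlocks {π : Finset (Finset ℕ)} {V : Finset ℕ} :
    V ∈ outerBlocks π ↔ V ∈ π ∧ ∀ W ∈ π, W ≠ V → Unsplit W V := by
  simp [outerBlocks]

lemma unsplit_union {V B B' : Finset ℕ} :
    Unsplit V (B ∪ B') ↔ Unsplit V B ∧ Unsplit V B' := by
  simp only [Unsplit, mem_union]
  grind

lemma Nested.refl (V : Finset ℕ) : Nested V V := fun w hw => ⟨⟨w, hw, le_rfl⟩, ⟨w, hw, le_rfl⟩⟩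

lemma IsNCPartition.eq_of_mem {Y B : Finset ℕ} {π : Finset (Finset ℕ)}
    (hπ : IsNCPartition Y B π) {V W : Finset ℕ} (hV : V ∈ π) (hW : W ∈ π) {x : ℕ}
    (hxV : x ∈ V) (hxW : x ∈ W) : V = W := by
  by_contra hne
  exact disjoint_left.1 (hπ.disjoint V hV W hW hne) hxV hxW

lemma IsNCPartition.exists_outer {Y B : Finset ℕ} {π : Finset (Finset ℕ)}
    (hπ : IsNCPartition Y B π) {W : Finset ℕ} (hW : W ∈ π) :
    ∃ V ∈ outerBlocks π, Nested W V := by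
  classical
  obtain ⟨V, hV, hmin⟩ := exists_min_image (π.filter fun V => Nested W V)
    (fun V => if h : V.Nonempty then V.min' h else 0)
    ⟨W, mem_filter.2 ⟨hW, Nested.refl W⟩⟩
  rw [mem_filter] at hV
  refine ⟨V, mem_outerBlocks.2 ⟨hV.1, ?_⟩, hV.2⟩
  intro U hU hUV
  by_contra hsplit
  have hVU : Unsplit V U := (hπ.noncrossing U hU V hV.1 hUV).resolve_left hsplit
  simp only [Unsplit, not_forall, not_not] at hsplit
  obtain ⟨x, hx, y, hy, b, hb, hxb, hby⟩ := hsplit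
  have key : ∀ v ∈ V, x < v ∧ v < y := by
    intro v hv
    constructor
    · by_contra hle
      rcases (not_lt.1 hle).lt_or_eq with hlt | rfl
      · exact hVU v hv b hb x hx hlt hxb
      · exact hUV (hπ.eq_of_mem hU hV.1 hx hv)
    · by_contra hle
      rcases (not_lt.1 hle).lt_or_eq with hlt | rfl
      · exact hVU b hb v hv y hy hby hlt
      · exact hUV (hπ.eq_of_mem hU hV.1 hy hv)
  have hWU : Nested W U := by
    intro w hw
    obtain ⟨⟨p, hp, hpw⟩, ⟨q, hq, hwq⟩⟩ := hV.2 w hw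
    exact ⟨⟨x, hx, ((key p hp).1.trans_le hpw).le⟩, ⟨y, hy, (hwq.trans_lt (key q hq).2).le⟩⟩
  have h1 := hmin U (mem_filter.2 ⟨hU, hWU⟩)
  have hVne : V.Nonempty := ⟨b, hb⟩
  have hUne : U.Nonempty := ⟨x, hx⟩
  simp only [hVne, hUne, dif_pos] at h1
  have h2 := (key _ (V.min'_mem hVne)).1
  have h3 := U.min'_le x hx
  omega

lemma IsNCPartition.outer_unique {Y B : Finset ℕ} {π : Finset (Finset ℕ)}
    (hπ : IsNCPartition Y B π) {W V V' : Finset ℕ} (hW : W ∈ π)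
    (hV : V ∈ outerBlocks π) (hV' : V' ∈ outerBlocks π) (h : Nested W V) (h' : Nested W V') :
    V = V' := by
  by_contra hne
  rw [mem_outerBlocks] at hV hV'
  obtain ⟨w, hw⟩ := hπ.nonempty W hW
  obtain ⟨⟨p, hp, hpw⟩, ⟨q, hq, hwq⟩⟩ := h w hw
  obtain ⟨⟨p', hp', hpw'⟩, ⟨q', hq', hwq'⟩⟩ := h' w hw
  have hd : ∀ x ∈ V, ∀ y ∈ V', x ≠ y := by
    rintro x hx _ hy rfl
    exact hne (hπ.eq_of_mem hV.1 hV'.1 hx hy)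
  have h1 := hV.2 V' hV'.1 (Ne.symm hne)
  have h2 := hV'.2 V hV.1 hne
  rcases lt_trichotomy p p' with hlt | heq | hgt
  · refine h2 p hp q hq p' hp' hlt (lt_of_le_of_ne (hpw'.trans hwq) ?_)
    exact (hd q hq p' hp').symm
  · exact hd p hp p' hp' heq
  · exact h1 p' hp' q' hq' p hp hgt (lt_of_le_of_ne (hpw.trans hwq') (hd p hp q' hq'))

lemma IsNCPartition.sum_nestCount_outer {Y B : Finset ℕ} {π : Finset (Finset ℕ)}
    (hπ : IsNCPartition Y B π) : ∑ V ∈ outerBlocks π, nestCount π V = π.card := by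
  classical
  simp only [nestCount, card_filter]
  rw [sum_comm, card_eq_sum_ones]
  refine sum_congr rfl fun W hW => ?_
  obtain ⟨V, hV, hWV⟩ := hπ.exists_outer hW
  rw [sum_eq_single_of_mem V hV, if_pos hWV]
  intro V' hV' hne
  exact if_neg fun h => hne (hπ.outer_unique hW hV' hV h hWV)

lemma IsNCPartition.not_nested_outer {Y B : Finset ℕ} {π : Finset (Finset ℕ)}
    (hπ : IsNCPartition Y B π) {V W : Finset ℕ} (hV : V ∈ outerBlocks π) (hW : W ∈ π)
    (hne : W ≠ V) : ¬ Nested V W := by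
  intro h
  rw [mem_outerBlocks] at hV
  obtain ⟨v, hv⟩ := hπ.nonempty V hV.1
  obtain ⟨⟨p, hp, hpw⟩, ⟨q, hq, hwq⟩⟩ := h v hv
  have hd : ∀ x ∈ W, x ≠ v := by
    rintro x hx rfl
    exact hne (hπ.eq_of_mem hW hV.1 hx hv)
  exact hV.2 W hW hne p hp q hq v hv (lt_of_le_of_ne hpw (hd p hp))
    (lt_of_le_of_ne hwq (hd q hq).symm)

lemma IsNCPartition.nestFactorial_erase {Y B : Finset ℕ} {π : Finset (Finset ℕ)}
    (hπ : IsNCPartition Y B π) {V : Finset ℕ} (hV : V ∈ outerBlocks π) :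
    nestFactorial π = nestCount π V * nestFactorial (π.erase V) := by
  classical
  rw [nestFactorial, ← mul_prod_erase π _ (mem_outerBlocks.1 hV).1, nestFactorial]
  congr 1
  refine prod_congr rfl fun W hW => ?_
  rw [mem_erase] at hW
  simp only [nestCount]
  rw [filter_erase, erase_eq_of_notMem]
  simp only [mem_filter, not_and]
  exact fun _ => hπ.not_nested_outer hV hW.2 hW.1

lemma nestCount_ne_zero {π : Finset (Finset ℕ)} {V : Finset ℕ} (hV : V ∈ π) :
    nestCount π V ≠ 0 := by
  classical
  exact card_ne_zero_of_mem (mem_filter.2 ⟨hV, Nested.refl V⟩)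

lemma IsNCPartition.erase_outer {Y B : Finset ℕ} {π : Finset (Finset ℕ)}
    (hπ : IsNCPartition Y B π) {V : Finset ℕ} (hV : V ∈ outerBlocks π) :
    IsNCPartition (Y \ V) (B ∪ V) (π.erase V) := by
  rw [mem_outerBlocks] at hV
  refine ⟨fun W hW => hπ.nonempty W (mem_of_mem_erase hW), ?_, ?_, ?_,
    fun W hW U hU => hπ.disjoint W (mem_of_mem_erase hW) U (mem_of_mem_erase hU),
    fun W hW U hU => hπ.noncrossing W (mem_of_mem_erase hW) U (mem_of_mem_erase hU)⟩
  · intro W hW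
    rw [mem_erase] at hW
    exact subset_sdiff.2 ⟨hπ.subset W hW.2, hπ.disjoint W hW.2 V hV.1 hW.1⟩
  · intro W hW
    rw [mem_erase] at hW
    exact unsplit_union.2 ⟨hπ.unsplit W hW.2, hV.2 W hW.2 hW.1⟩
  · intro x hx
    rw [mem_sdiff] at hx
    obtain ⟨W, hW, hxW⟩ := hπ.cover x hx.1
    refine ⟨W, mem_erase.2 ⟨?_, hW⟩, hxW⟩
    rintro rfl
    exact hx.2 hxW

lemma IsNCPartition.insert_outer {Y B V : Finset ℕ} {π : Finset (Finset ℕ)}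
    (hV : V ∈ unsplitSubsets Y B) (hπ : IsNCPartition (Y \ V) (B ∪ V) π) :
    IsNCPartition Y B (insert V π) ∧ V ∈ outerBlocks (insert V π) ∧ V ∉ π := by
  rw [mem_unsplitSubsets] at hV
  obtain ⟨hVY, hVne, hVB⟩ := hV
  have hdis : ∀ W ∈ π, Disjoint W V := fun W hW => (subset_sdiff.1 (hπ.subset W hW)).2
  have hu : ∀ W ∈ π, Unsplit W V := fun W hW => (unsplit_union.1 (hπ.unsplit W hW)).2
  refine ⟨⟨?_, ?_, ?_, ?_, ?_, ?_⟩, ?_, ?_⟩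
  · intro W hW
    rcases mem_insert.1 hW with rfl | hW
    exacts [hVne, hπ.nonempty W hW]
  · intro W hW
    rcases mem_insert.1 hW with rfl | hW
    exacts [hVY, (hπ.subset W hW).trans sdiff_subset]
  · intro W hW
    rcases mem_insert.1 hW with rfl | hW
    exacts [hVB, (unsplit_union.1 (hπ.unsplit W hW)).1]
  · intro x hx
    by_cases hxV : x ∈ V
    · exact ⟨V, mem_insert_self _ _, hxV⟩
    · obtain ⟨W, hW, hxW⟩ := hπ.cover x (mem_sdiff.2 ⟨hx, hxV⟩)
      exact ⟨W, mem_insert_of_mem hW, hxW⟩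
  · intro W hW U hU hne
    rcases mem_insert.1 hW with rfl | hW' <;> rcases mem_insert.1 hU with rfl | hU'
    exacts [absurd rfl hne, (hdis U hU').symm, hdis W hW', hπ.disjoint W hW' U hU' hne]
  · intro W hW U hU hne
    rcases mem_insert.1 hW with rfl | hW' <;> rcases mem_insert.1 hU with rfl | hU'
    exacts [absurd rfl hne, Or.inr (hu U hU'), Or.inl (hu W hW'),
      hπ.noncrossing W hW' U hU' hne]
  · refine mem_outerBlocks.2 ⟨mem_insert_self _ _, fun W hW hne => ?_⟩
    exact hu W ((mem_insert.1 hW).resolve_left hne)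
  · intro h
    obtain ⟨v, hv⟩ := hVne
    exact disjoint_left.1 (hdis V h) hv hv

theorem derivative_ncPoly (h : Finset ℕ → ℂ) (Y B : Finset ℕ) :
    derivative (ncPoly h Y B) =
      ∑ V ∈ unsplitSubsets Y B, C (h V) * ncPoly h (Y \ V) (B ∪ V) := by
  have step : ∀ π ∈ ncPartitions Y B,
      derivative (C ((nestFactorial π : ℂ)⁻¹ * ∏ V ∈ π, h V) * X ^ π.card) =
        ∑ V ∈ outerBlocks π, C (h V) * (C ((nestFactorial (π.erase V) : ℂ)⁻¹ *
          ∏ W ∈ π.erase V, h W) * X ^ (π.erase V).card) := by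
    intro π hπ
    rw [mem_ncPartitions] at hπ
    have term : ∀ V ∈ outerBlocks π, C (h V) * (C ((nestFactorial (π.erase V) : ℂ)⁻¹ *
          ∏ W ∈ π.erase V, h W) * X ^ (π.erase V).card) =
        C ((nestCount π V : ℂ)) *
          (C ((nestFactorial π : ℂ)⁻¹ * ∏ V ∈ π, h V) * X ^ (π.card - 1)) := by
      intro V hV
      have hVπ := (mem_outerBlocks.1 hV).1
      have hc : (nestCount π V : ℂ) ≠ 0 := Nat.cast_ne_zero.2 (nestCount_ne_zero hVπ)
      rw [card_erase_of_mem hVπ, ← mul_assoc, ← mul_assoc, ← C_mul, ← C_mul,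
        hπ.nestFactorial_erase hV, ← mul_prod_erase π h hVπ]
      congr 2
      push_cast
      rw [mul_inv]
      field_simp
    rw [sum_congr rfl term, ← sum_mul, ← map_sum, ← Nat.cast_sum, hπ.sum_nestCount_outer]
    rw [derivative_C_mul, derivative_X_pow]
    ring
  rw [ncPoly, derivative_sum, sum_congr rfl step]
  simp only [ncPoly, mul_sum]
  rw [sum_sigma', sum_sigma']
  refine sum_bij' (fun x _ => ⟨x.2, x.1.erase x.2⟩) (fun x _ => ⟨insert x.1 x.2, x.1⟩)
    ?_ ?_ ?_ ?_ ?_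
  · rintro ⟨π, V⟩ hx
    rw [mem_sigma, mem_ncPartitions] at hx
    have hV := mem_outerBlocks.1 hx.2
    refine mem_sigma.2 ⟨mem_unsplitSubsets.2 ⟨hx.1.subset V hV.1, hx.1.nonempty V hV.1,
      hx.1.unsplit V hV.1⟩, mem_ncPartitions.2 (hx.1.erase_outer hx.2)⟩
  · rintro ⟨V, π⟩ hx
    rw [mem_sigma, mem_ncPartitions] at hx
    have := IsNCPartition.insert_outer hx.1 hx.2
    exact mem_sigma.2 ⟨mem_ncPartitions.2 this.1, this.2.1⟩
  · rintro ⟨π, V⟩ hx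
    rw [mem_sigma] at hx
    simp [insert_erase (mem_outerBlocks.1 hx.2).1]
  · rintro ⟨V, π⟩ hx
    rw [mem_sigma, mem_ncPartitions] at hx
    simp [erase_insert (IsNCPartition.insert_outer hx.1 hx.2).2.2]
  · rintro ⟨π, V⟩ hx
    rfl

lemma eval_zero_ncPoly (h : Finset ℕ → ℂ) (Y B : Finset ℕ) :
    (ncPoly h Y B).eval 0 = if Y = ∅ then 1 else 0 := by
  simp only [ncPoly, eval_finsetSum, eval_mul, eval_C, eval_pow, eval_X]
  split_ifs with hY
  · subst hY
    rw [sum_eq_single_of_mem ∅]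
    · simp [nestFactorial]
    · rw [mem_ncPartitions]
      constructor <;> simp
    · intro π hπ hne
      rw [mem_ncPartitions] at hπ
      obtain ⟨V, hV⟩ := nonempty_iff_ne_empty.2 hne
      exact absurd (subset_empty.1 (hπ.subset V hV)) (hπ.nonempty V hV).ne_empty
  · refine sum_eq_zero fun π hπ => ?_
    rw [mem_ncPartitions] at hπ
    obtain ⟨y, hy⟩ := nonempty_iff_ne_empty.2 hY
    obtain ⟨V, hV, -⟩ := hπ.cover y hy
    simp [card_ne_zero_of_mem hV]

lemma eq_of_derivative_eq {p q : ℂ[X]} (hd : derivative p = derivative q)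
    (h0 : p.eval 0 = q.eval 0) : p = q := by
  have h1 : derivative (p - q) = 0 := by rw [derivative_sub, hd, sub_self]
  have h2 := derivative_eq_zero.1 h1
  rw [natDegree_eq_zero] at h2
  obtain ⟨c, hc⟩ := h2
  have h3 : c = 0 := by
    have := congrArg (eval 0) hc
    simpa [h0] using this
  rw [h3, C_0] at hc
  exact sub_eq_zero.1 hc.symm

lemma ncPoly_empty (h : Finset ℕ → ℂ) : ncPoly h ∅ ∅ = 1 := by
  refine eq_of_derivative_eq ?_ ?_
  · rw [derivative_ncPoly, derivative_one]
    refine sum_eq_zero fun V hV => ?_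
    have hV' := mem_unsplitSubsets.1 hV
    exact absurd (subset_empty.1 hV'.1) hV'.2.1.ne_empty
  · rw [eval_zero_ncPoly, if_pos rfl, eval_one]

lemma ncPoly_congr (h : Finset ℕ → ℂ) {Y B B' : Finset ℕ}
    (hB : ∀ V ⊆ Y, Unsplit V B ↔ Unsplit V B') : ncPoly h Y B = ncPoly h Y B' := by
  have : ncPartitions Y B = ncPartitions Y B' := by
    ext π
    simp only [mem_ncPartitions]
    constructor
    · exact fun hπ => ⟨hπ.1, hπ.2, fun V hV => (hB V (hπ.2 V hV)).1 (hπ.3 V hV), hπ.4, hπ.5, hπ.6⟩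
    · exact fun hπ => ⟨hπ.1, hπ.2, fun V hV => (hB V (hπ.2 V hV)).2 (hπ.3 V hV), hπ.4, hπ.5, hπ.6⟩
  rw [ncPoly, ncPoly, this]

/-- The semigroup property of the monotone convolution powers. -/
theorem ncPoly_comp_add (h : Finset ℕ → ℂ) (t : ℂ) (Y B : Finset ℕ) :
    (ncPoly h Y B).comp (X + C t) =
      ∑ T ∈ Y.powerset, ncPoly h T B * C ((ncPoly h (Y \ T) (B ∪ T)).eval t) := by
  induction hn : Y.card using Nat.strong_induction_on generalizing Y B with
  | _ n ih =>
  subst hn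
  refine eq_of_derivative_eq ?_ ?_
  · rw [derivative_comp, derivative_ncPoly]
    simp only [derivative_add, derivative_X, derivative_C, add_zero, one_mul, derivative_sum,
      derivative_mul, mul_zero, Polynomial.sum_comp, mul_comp, C_comp]
    have hL : ∀ V ∈ unsplitSubsets Y B,
        C (h V) * (ncPoly h (Y \ V) (B ∪ V)).comp (X + C t) =
        ∑ T ∈ (Y \ V).powerset, C (h V) * (ncPoly h T (B ∪ V) *
          C ((ncPoly h ((Y \ V) \ T) (B ∪ V ∪ T)).eval t)) := by
      intro V hV
      rw [mem_unsplitSubsets] at hV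
      rw [ih _ (card_lt_card (sdiff_ssubset hV.1 hV.2.1)) _ _ rfl, mul_sum]
    have hR : ∀ T ∈ Y.powerset, derivative (ncPoly h T B) *
          C ((ncPoly h (Y \ T) (B ∪ T)).eval t) =
        ∑ V ∈ unsplitSubsets T B, C (h V) * ncPoly h (T \ V) (B ∪ V) *
          C ((ncPoly h (Y \ T) (B ∪ T)).eval t) := by
      intro T _
      rw [derivative_ncPoly, sum_mul]
    rw [sum_congr rfl hL, sum_congr rfl hR, sum_sigma', sum_sigma']
    refine sum_bij' (fun x _ => ⟨x.1 ∪ x.2, x.1⟩) (fun x _ => ⟨x.2, x.1 \ x.2⟩) ?_ ?_ ?_ ?_ ?_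
    · rintro ⟨V, T⟩ hx
      simp only [mem_sigma, mem_unsplitSubsets, mem_powerset] at hx ⊢
      exact ⟨union_subset hx.1.1 (hx.2.trans sdiff_subset), subset_union_left, hx.1.2⟩
    · rintro ⟨T, V⟩ hx
      simp only [mem_sigma, mem_unsplitSubsets, mem_powerset] at hx ⊢
      exact ⟨⟨hx.2.1.trans hx.1, hx.2.2⟩, sdiff_subset_sdiff hx.1 subset_rfl⟩
    · rintro ⟨V, T⟩ hx
      simp only [mem_sigma, mem_powerset] at hx
      have hd : Disjoint T V := (subset_sdiff.1 hx.2).2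
      simp [union_sdiff_left, sdiff_eq_self_of_disjoint hd]
    · rintro ⟨T, V⟩ hx
      simp only [mem_sigma, mem_unsplitSubsets] at hx
      simp [union_sdiff_of_subset hx.2.1]
    · rintro ⟨V, T⟩ hx
      simp only [mem_sigma, mem_powerset] at hx
      have hd : Disjoint T V := (subset_sdiff.1 hx.2).2
      simp only [union_sdiff_left, sdiff_eq_self_of_disjoint hd, sdiff_sdiff_left, union_assoc,
        sup_eq_union, mul_assoc]
  · rw [eval_comp, eval_finsetSum, sum_eq_single_of_mem ∅ (empty_mem_powerset _)]
    · simp [eval_zero_ncPoly]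
    · intro T _ hT
      simp [eval_zero_ncPoly, hT]

lemma eval_add_one_ncPoly (h : Finset ℕ → ℂ) (t : ℂ) (Y : Finset ℕ) :
    (ncPoly h Y ∅).eval (t + 1) =
      ∑ T ∈ Y.powerset, (ncPoly h T ∅).eval 1 * (ncPoly h (Y \ T) T).eval t := by
  have := congrArg (eval 1) (ncPoly_comp_add h t Y ∅)
  rw [eval_comp, eval_finsetSum] at this
  simpa [add_comm] using this

lemma eval_zero_derivative_ncPoly (h : Finset ℕ → ℂ) {Y : Finset ℕ} (hY : Y.Nonempty) :
    (derivative (ncPoly h Y ∅)).eval 0 = h Y := by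
  rw [derivative_ncPoly, eval_finsetSum, sum_eq_single_of_mem Y]
  · simp [eval_zero_ncPoly]
  · exact mem_unsplitSubsets.2 ⟨subset_rfl, hY, by simp [Unsplit]⟩
  · intro V hV hne
    rw [mem_unsplitSubsets] at hV
    rw [eval_mul, eval_zero_ncPoly, if_neg, mul_zero]
    exact fun h0 => hne (hV.1.antisymm (sdiff_eq_empty_iff_subset.1 h0))

lemma ncPoly_union (h : Finset ℕ → ℂ) {i : ℕ} {Y Z B : Finset ℕ} (hi : i ∈ B)
    (hY : ∀ y ∈ Y, y < i) (hZ : ∀ z ∈ Z, i < z) :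
    ncPoly h (Y ∪ Z) B = ncPoly h Y B * ncPoly h Z B := by
  induction hn : (Y ∪ Z).card using Nat.strong_induction_on generalizing Y Z B with
  | _ n ih =>
  subst hn
  have hYZ : Disjoint Y Z := disjoint_left.2 fun x hx hx' => by
    have := hY x hx
    have := hZ x hx'
    omega
  refine eq_of_derivative_eq ?_ ?_
  · have hsplit : unsplitSubsets (Y ∪ Z) B = unsplitSubsets Y B ∪ unsplitSubsets Z B := by
      ext V
      simp only [mem_union, mem_unsplitSubsets]
      constructor
      · rintro ⟨hV, hne, hu⟩
        by_cases h1 : V ⊆ Y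
        · exact Or.inl ⟨h1, hne, hu⟩
        refine Or.inr ⟨?_, hne, hu⟩
        obtain ⟨z, hzV, hzY⟩ := not_subset.1 h1
        have hz := (mem_union.1 (hV hzV)).resolve_left hzY
        intro y hyV
        refine (mem_union.1 (hV hyV)).resolve_left fun hy => ?_
        exact hu y hyV z hzV i hi (hY y hy) (hZ z hz)
      · rintro (⟨hV, h⟩ | ⟨hV, h⟩)
        exacts [⟨hV.trans subset_union_left, h⟩, ⟨hV.trans subset_union_right, h⟩]
    have hdisj : Disjoint (unsplitSubsets Y B) (unsplitSubsets Z B) := by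
      refine disjoint_left.2 fun V hV hV' => ?_
      rw [mem_unsplitSubsets] at hV hV'
      obtain ⟨v, hv⟩ := hV.2.1
      exact disjoint_left.1 hYZ (hV.1 hv) (hV'.1 hv)
    rw [derivative_ncPoly, hsplit, sum_union hdisj, derivative_mul, derivative_ncPoly,
      derivative_ncPoly, sum_mul, mul_sum]
    refine congrArg₂ (· + ·) ?_ ?_
    · refine sum_congr rfl fun V hV => ?_
      rw [mem_unsplitSubsets] at hV
      have hVZ : Disjoint Z V := (hYZ.mono_left hV.1).symm
      have hlt : ((Y \ V) ∪ Z).card < (Y ∪ Z).card := by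
        have heq : (Y \ V) ∪ Z = (Y ∪ Z) \ V := by
          rw [union_sdiff_distrib, sdiff_eq_self_of_disjoint hVZ]
        rw [heq]
        exact card_lt_card (sdiff_ssubset (hV.1.trans subset_union_left) hV.2.1)
      rw [union_sdiff_distrib, sdiff_eq_self_of_disjoint hVZ,
        ih _ hlt (mem_union_left _ hi) (fun y hy => hY y (mem_sdiff.1 hy).1) hZ rfl, mul_assoc,
        ncPoly_congr h (Y := Z) (B := B ∪ V) (B' := B)]
      intro W hW
      rw [unsplit_union, and_iff_left]
      intro x hx y _ b hb hxb
      have := hZ x (hW hx)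
      have := hY b (hV.1 hb)
      omega
    · refine sum_congr rfl fun V hV => ?_
      rw [mem_unsplitSubsets] at hV
      have hVY : Disjoint Y V := hYZ.mono_right hV.1
      have hlt : (Y ∪ (Z \ V)).card < (Y ∪ Z).card := by
        have heq : Y ∪ (Z \ V) = (Y ∪ Z) \ V := by
          rw [union_sdiff_distrib, sdiff_eq_self_of_disjoint hVY]
        rw [heq]
        exact card_lt_card (sdiff_ssubset (hV.1.trans subset_union_right) hV.2.1)
      rw [union_sdiff_distrib, sdiff_eq_self_of_disjoint hVY,
        ih _ hlt (mem_union_left _ hi) hY (fun y hy => hZ y (mem_sdiff.1 hy).1) rfl,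
        mul_left_comm, ncPoly_congr h (Y := Y) (B := B ∪ V) (B' := B)]
      intro W hW
      rw [unsplit_union, and_iff_left]
      intro x _ y hy b hb _
      have := hY y (hW hy)
      have := hZ b (hV.1 hb)
      omega
  · rw [eval_mul, eval_zero_ncPoly, eval_zero_ncPoly, eval_zero_ncPoly]
    simp only [union_eq_empty]
    split_ifs <;> simp_all

lemma ncPoly_split (h : Finset ℕ → ℂ) {i : ℕ} {Y Z B : Finset ℕ}
    (hY : ∀ y ∈ Y, y < i) (hZ : ∀ z ∈ Z, i < z) (hB : ∀ b ∈ B, i < b) :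
    ncPoly h (Y ∪ Z) (insert i B) = ncPoly h Y ∅ * ncPoly h Z B := by
  rw [ncPoly_union h (mem_insert_self i B) hY hZ,
    ncPoly_congr h (Y := Y) (B := insert i B) (B' := ∅),
    ncPoly_congr h (Y := Z) (B := insert i B) (B' := B)]
  · intro W hW
    rw [insert_eq, unsplit_union, and_iff_right]
    intro x hx y _ b hb
    have := hZ x (hW hx)
    rw [mem_singleton] at hb
    omega
  · intro W hW
    refine iff_of_true ?_ (by simp [Unsplit])
    intro x _ y hy b hb _
    have := hY y (hW hy)
    rcases mem_insert.1 hb with rfl | hb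
    · omega
    · have := hB b hb
      omega

end PartitionPolynomials

section Transport

/-- The word functional `f` read along the positions in a finite set. -/
noncomputable def onPositions {A : Type*} (f : List A → ℂ) (a : ℕ → A) (S : Finset ℕ) : ℂ :=
  f (S.sort.map a)

/-- The blocks of `π`, transported along an order embedding into `ℕ`. -/
def mapParts {m : ℕ} (e : Fin m ↪o ℕ) (π : NPart m) : Finset (Finset ℕ) :=
  π.parts.map (mapEmbedding e.toEmbedding).toEmbedding

lemma mem_mapParts {m : ℕ} {e : Fin m ↪o ℕ} {π : NPart m} {V : Finset ℕ} :
    V ∈ mapParts e π ↔ ∃ W ∈ π.parts, W.map e.toEmbedding = V := by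
  simp [mapParts]

lemma nestedIn_iff {m : ℕ} (e : Fin m ↪o ℕ) (V W : Finset (Fin m)) :
    NestedIn W V ↔ Nested (W.map e.toEmbedding) (V.map e.toEmbedding) := by
  simp [NestedIn, Nested]

lemma nestFactorial_mapParts {m : ℕ} (e : Fin m ↪o ℕ) (π : NPart m) :
    nestFactorial (mapParts e π) = forestFactorial π := by
  classical
  rw [nestFactorial, mapParts, prod_map, forestFactorial]
  refine prod_congr rfl fun V _ => ?_
  rw [nestCount, filter_map, card_map]
  congr 1
  ext W
  simp only [mem_filter, nestedIn_iff e]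
  rfl

lemma unsplit_map_iff {m : ℕ} (e : Fin m ↪o ℕ) (V W : Finset (Fin m)) :
    Unsplit (V.map e.toEmbedding) (W.map e.toEmbedding) ↔
      ∀ x ∈ V, ∀ y ∈ V, ∀ b ∈ W, x < b → ¬ b < y := by
  simp [Unsplit]

lemma isNoncrossing_iff {m : ℕ} (e : Fin m ↪o ℕ) (π : NPart m) :
    IsNoncrossing π ↔ ∀ V ∈ π.parts, ∀ W ∈ π.parts, V ≠ W →
      Unsplit (V.map e.toEmbedding) (W.map e.toEmbedding) ∨
        Unsplit (W.map e.toEmbedding) (V.map e.toEmbedding) := by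
  simp only [unsplit_map_iff]
  constructor
  · intro h V hV W hW hne
    by_contra hcon
    push Not at hcon
    obtain ⟨⟨v₁, hv₁, v₂, hv₂, w, hw, h1, h2⟩, ⟨w₁, hw₁, w₂, hw₂, v, hv, h3, h4⟩⟩ := hcon
    rcases lt_trichotomy v w with hlt | heq | hgt
    · exact hne (h w₁ v w v₂ h3 hlt h2 W hW V hV hw₁ hw hv hv₂).symm
    · subst heq
      exact disjoint_left.1 (π.disjoint hV hW hne) hv hw
    · exact hne (h v₁ w v w₂ h1 hgt h4 V hV W hW hv₁ hv hw hw₂)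
  · intro h a b c d hab hbc hcd V hV W hW haV hcV hbW hdW
    by_contra hne
    rcases h V hV W hW hne with h' | h'
    · exact h' a haV c hcV b hbW hab hbc
    · exact h' b hbW d hdW c hcV hbc hcd

lemma isNCPartition_mapParts {m : ℕ} (e : Fin m ↪o ℕ) {π : NPart m} (hπ : IsNoncrossing π) :
    IsNCPartition (univ.map e.toEmbedding) ∅ (mapParts e π) := by
  refine ⟨?_, ?_, ?_, ?_, ?_, ?_⟩
  · intro V hV
    obtain ⟨W, hW, rfl⟩ := mem_mapParts.1 hV
    exact (π.nonempty_of_mem_parts hW).map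
  · intro V hV
    obtain ⟨W, hW, rfl⟩ := mem_mapParts.1 hV
    exact map_subset_map.2 (subset_univ W)
  · simp [Unsplit]
  · intro x hx
    obtain ⟨i, -, rfl⟩ := mem_map.1 hx
    obtain ⟨W, hW, hi⟩ := π.exists_mem (mem_univ i)
    exact ⟨_, mem_mapParts.2 ⟨W, hW, rfl⟩, mem_map_of_mem _ hi⟩
  · intro V hV V' hV' hne
    obtain ⟨W, hW, rfl⟩ := mem_mapParts.1 hV
    obtain ⟨W', hW', rfl⟩ := mem_mapParts.1 hV'
    refine (disjoint_map _).2 (π.disjoint hW hW' ?_)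
    rintro rfl
    exact hne rfl
  · intro V hV V' hV' hne
    obtain ⟨W, hW, rfl⟩ := mem_mapParts.1 hV
    obtain ⟨W', hW', rfl⟩ := mem_mapParts.1 hV'
    refine (isNoncrossing_iff e π).1 hπ W hW W' hW' ?_
    rintro rfl
    exact hne rfl

lemma exists_mapParts_eq {m : ℕ} (e : Fin m ↪o ℕ) {σ : Finset (Finset ℕ)}
    (hσ : IsNCPartition (univ.map e.toEmbedding) ∅ σ) :
    ∃ π : NPart m, IsNoncrossing π ∧ mapParts e π = σ := by
  classical
  let pull : Finset ℕ → Finset (Fin m) := fun V => univ.filter fun i => e i ∈ V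
  have hpull : ∀ V ∈ σ, (pull V).map e.toEmbedding = V := by
    intro V hV
    ext x
    simp only [pull, mem_map, mem_filter, mem_univ, true_and, RelEmbedding.coe_toEmbedding]
    constructor
    · rintro ⟨i, hi, rfl⟩
      exact hi
    · intro hx
      obtain ⟨i, -, rfl⟩ := mem_map.1 (hσ.subset V hV hx)
      exact ⟨i, hx, rfl⟩
  let π : NPart m := Finpartition.ofExistsUnique (σ.image pull) (fun p _ => subset_univ p)
    (by
      intro i _
      obtain ⟨V, hV, hi⟩ := hσ.cover (e i) (mem_map_of_mem _ (mem_univ i))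
      refine ⟨pull V, ⟨mem_image_of_mem _ hV, by simpa [pull] using hi⟩, ?_⟩
      rintro _ ⟨hW', hiW⟩
      obtain ⟨W, hW, rfl⟩ := mem_image.1 hW'
      rw [hσ.eq_of_mem hW hV (x := e i) (by simpa [pull] using hiW) hi])
    (by
      intro h
      obtain ⟨V, hV, hVe⟩ := mem_image.1 h
      have := hpull V hV
      rw [hVe, map_empty] at this
      exact (hσ.nonempty V hV).ne_empty this.symm)
  have hπ : π.parts = σ.image pull := rfl
  refine ⟨π, (isNoncrossing_iff e π).2 ?_, ?_⟩
  · intro V hV W hW hne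
    rw [hπ] at hV hW
    obtain ⟨V', hV', rfl⟩ := mem_image.1 hV
    obtain ⟨W', hW', rfl⟩ := mem_image.1 hW
    rw [hpull V' hV', hpull W' hW']
    refine hσ.noncrossing V' hV' W' hW' ?_
    rintro rfl
    exact hne rfl
  · ext V
    rw [mem_mapParts, hπ]
    constructor
    · rintro ⟨W, hW, rfl⟩
      obtain ⟨U, hU, rfl⟩ := mem_image.1 hW
      rwa [hpull U hU]
    · exact fun hV => ⟨pull V, mem_image_of_mem _ hV, hpull V hV⟩

lemma sort_map_orderEmbedding {m : ℕ} (e : Fin m ↪o ℕ) (V : Finset (Fin m)) :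
    (V.map e.toEmbedding).sort = V.sort.map e :=
  (map_sort e.toEmbedding V (· ≤ ·) (· ≤ ·) fun a _ b _ => by simp).symm

lemma onPositions_map {A : Type*} {m : ℕ} (f : List A → ℂ) (a : ℕ → A) (e : Fin m ↪o ℕ)
    (V : Finset (Fin m)) :
    onPositions f a (V.map e.toEmbedding) = f (V.sort.map fun i => a (e i)) := by
  rw [onPositions, sort_map_orderEmbedding, List.map_map]
  rfl

lemma eval_one_ncPoly {A : Type*} [Ring A] {φ : A → ℂ} {h : List A → ℂ}
    (hmc : MonotoneMC φ h) (a : ℕ → A) {Y : Finset ℕ} (hY : Y.Nonempty) :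
    (ncPoly (onPositions h a) Y ∅).eval 1 = onPositions (fun l => φ l.prod) a Y := by
  classical
  obtain ⟨m, hm, e, hYe, hw⟩ : ∃ m, 1 ≤ m ∧ ∃ e : Fin m ↪o ℕ, univ.map e.toEmbedding = Y ∧
      (Y.sort (· ≤ ·)).map a = List.ofFn fun i => a (e i) := by
    refine ⟨Y.card, hY.card_pos, Y.orderEmbOfFin rfl, map_orderEmbOfFin_univ Y rfl, ?_⟩
    rw [← listMap_orderEmbOfFin_finRange Y rfl, List.map_map, List.ofFn_eq_map]
    rfl
  subst hYe
  rw [onPositions, hw, hmc m hm]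
  have hset : {π : NPart m | IsNoncrossing π} =
      ((univ.filter fun π : NPart m => IsNoncrossing π : Finset _) : Set (NPart m)) := by
    ext; simp
  rw [hset, finsum_mem_coe_finset, ncPoly, eval_finsetSum]
  symm
  refine sum_bij (fun π _ => mapParts e π) ?_ ?_ ?_ ?_
  · intro π hπ
    rw [mem_ncPartitions]
    exact isNCPartition_mapParts e (mem_filter.1 hπ).2
  · intro π _ π' _ heq
    exact Finpartition.ext (map_injective _ heq)
  · intro σ hσ
    rw [mem_ncPartitions] at hσ
    obtain ⟨π, hπ, rfl⟩ := exists_mapParts_eq e hσ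
    exact ⟨π, by simpa using hπ, rfl⟩
  · intro π _
    rw [nestFactorial_mapParts, mapParts, prod_map, eval_mul, eval_C, eval_pow, eval_X, one_pow,
      mul_one]
    simp [blockApply, onPositions_map]

end Transport

section TreeVertices

open PTree

lemma PTree_induction {P : PTree → Prop} (h : ∀ cs, (∀ c ∈ cs, P c) → P (node cs)) (t : PTree) :
    P t :=
  match t with
  | .node cs => h cs fun c _ => PTree_induction h c
termination_by sizeOf t

/-- The number of leaves of the first `j` trees of a forest. -/
noncomputable def leafOffset (cs : List PTree) (j : ℕ) : ℕ :=
  ∑ i ∈ range j, numLeaves (cs.getD i leaf)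

/-- The paths starting with some `j < n` and continuing in `E j`. -/
def childPaths (n : ℕ) (E : ℕ → Set (List ℕ)) : Set (List ℕ) :=
  {q | ∃ j < n, ∃ p ∈ E j, q = j :: p}

lemma childPaths_succ (n : ℕ) (E : ℕ → Set (List ℕ)) :
    childPaths (n + 1) E = childPaths n E ∪ List.cons n '' E n := by
  ext q
  simp only [childPaths, Set.mem_ofPred_eq, Set.mem_union, Set.mem_image]
  constructor
  · rintro ⟨j, hj, p, hp, rfl⟩
    rcases Nat.lt_succ_iff_lt_or_eq.1 hj with hlt | rfl
    exacts [Or.inl ⟨j, hlt, p, hp, rfl⟩, Or.inr ⟨p, hp, rfl⟩]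
  · rintro (⟨j, hj, p, hp, rfl⟩ | ⟨p, hp, rfl⟩)
    exacts [⟨j, hj.trans (Nat.lt_succ_self n), p, hp, rfl⟩, ⟨n, Nat.lt_succ_self n, p, hp, rfl⟩]

lemma disjoint_childPaths (n : ℕ) (E : ℕ → Set (List ℕ)) :
    Disjoint (childPaths n E) (List.cons n '' E n) := by
  rw [Set.disjoint_left]
  rintro _ ⟨j, hj, p, -, rfl⟩ ⟨p', -, heq⟩
  simp only [List.cons.injEq] at heq
  omega

lemma finite_childPaths (n : ℕ) (E : ℕ → Set (List ℕ)) (hE : ∀ j < n, (E j).Finite) :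
    (childPaths n E).Finite := by
  induction n with
  | zero => simp [childPaths]
  | succ n ih =>
    rw [childPaths_succ]
    exact (ih fun j hj => hE j (by omega)).union ((hE n (by omega)).image _)

lemma ncard_childPaths (n : ℕ) (E : ℕ → Set (List ℕ)) (hE : ∀ j < n, (E j).Finite) :
    (childPaths n E).ncard = ∑ j ∈ range n, (E j).ncard := by
  induction n with
  | zero => simp [childPaths]
  | succ n ih =>
    rw [childPaths_succ, Set.ncard_union_eq (disjoint_childPaths n E)
      (finite_childPaths n E fun j hj => hE j (by omega)) ((hE n (by omega)).image _),
      ih fun j hj => hE j (by omega), sum_range_succ,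
      Set.ncard_image_of_injective _ List.cons_injective]

lemma finprod_childPaths (n : ℕ) (E : ℕ → Set (List ℕ)) (hE : ∀ j < n, (E j).Finite)
    (F : List ℕ → ℂ) :
    ∏ᶠ q ∈ childPaths n E, F q = ∏ j ∈ range n, ∏ᶠ p ∈ E j, F (j :: p) := by
  induction n with
  | zero => simp [childPaths]
  | succ n ih =>
    rw [childPaths_succ, finprod_mem_union (disjoint_childPaths n E)
      (finite_childPaths n E fun j hj => hE j (by omega)) ((hE n (by omega)).image _),
      ih fun j hj => hE j (by omega), prod_range_succ,
      finprod_mem_image List.cons_injective.injOn]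

lemma not_isInternalAt_leaf (p : List ℕ) : ¬ IsInternalAt leaf p := by
  rintro ⟨cs, h, hne⟩
  cases p <;> simp_all [subtreeAt]

lemma isInternalAt_nil {cs : List PTree} : IsInternalAt (node cs) [] ↔ cs ≠ [] := by
  simp [IsInternalAt, subtreeAt]

lemma subtreeAt_cons {cs : List PTree} {j : ℕ} (hj : j < cs.length) (p : List ℕ) :
    subtreeAt (j :: p) (node cs) = subtreeAt p (cs.getD j leaf) := by
  simp [subtreeAt, hj]

lemma subtreeAt_cons_of_le {cs : List PTree} {j : ℕ} (hj : cs.length ≤ j) (p : List ℕ) :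
    subtreeAt (j :: p) (node cs) = none := by
  simp [subtreeAt, hj]

lemma isInternalAt_cons {cs : List PTree} {j : ℕ} {p : List ℕ} :
    IsInternalAt (node cs) (j :: p) ↔ IsInternalAt (cs.getD j leaf) p := by
  rcases lt_or_ge j cs.length with hj | hj
  · rw [IsInternalAt, subtreeAt_cons hj, IsInternalAt]
  · rw [List.getD_eq_default _ _ hj, iff_false_right (not_isInternalAt_leaf p), IsInternalAt,
      subtreeAt_cons_of_le hj]
    simp

lemma lt_length_of_isInternalAt {cs : List PTree} {j : ℕ} {p : List ℕ}
    (h : IsInternalAt (node cs) (j :: p)) : j < cs.length := by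
  by_contra hj
  rw [isInternalAt_cons, List.getD_eq_default _ _ (not_lt.1 hj)] at h
  exact not_isInternalAt_leaf p h

lemma isLeafAt_cons {cs : List PTree} {j : ℕ} {p : List ℕ} :
    IsLeafAt (node cs) (j :: p) ↔ j < cs.length ∧ IsLeafAt (cs.getD j leaf) p := by
  rcases lt_or_ge j cs.length with hj | hj
  · rw [IsLeafAt, subtreeAt_cons hj, IsLeafAt, and_iff_right hj]
  · rw [IsLeafAt, subtreeAt_cons_of_le hj]
    simp [hj]

lemma isLeafAt_nil {cs : List PTree} : IsLeafAt (node cs) [] ↔ cs = [] := by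
  simp [IsLeafAt, subtreeAt]

lemma getD_mem {cs : List PTree} {j : ℕ} (hj : j < cs.length) : cs.getD j leaf ∈ cs := by
  rw [List.getD_eq_getElem _ _ hj]
  exact List.getElem_mem hj

lemma setOf_isLeafAt {cs : List PTree} (hcs : cs ≠ []) :
    {p | IsLeafAt (node cs) p} = childPaths cs.length fun j => {p | IsLeafAt (cs.getD j leaf) p} := by
  ext q
  rcases q with _ | ⟨j, p⟩
  · simp [isLeafAt_nil, hcs, childPaths]
  · simp [isLeafAt_cons, childPaths]

lemma setOf_isInternalAt {cs : List PTree} (hcs : cs ≠ []) :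
    {p | IsInternalAt (node cs) p} =
      insert [] (childPaths cs.length fun j => {p | IsInternalAt (cs.getD j leaf) p}) := by
  ext q
  rcases q with _ | ⟨j, p⟩
  · simp [isInternalAt_nil, hcs]
  · simp only [Set.mem_ofPred_eq, childPaths, Set.mem_insert_iff, reduceCtorEq, false_or]
    constructor
    · exact fun h => ⟨j, lt_length_of_isInternalAt h, p, isInternalAt_cons.1 h, rfl⟩
    · rintro ⟨_, _, _, h, heq⟩
      cases heq
      exact isInternalAt_cons.2 h

lemma setOf_isLeafAt_leaf : {p | IsLeafAt leaf p} = {[]} := by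
  ext q
  rcases q with _ | ⟨j, p⟩ <;> simp [isLeafAt_nil, isLeafAt_cons]

lemma setOf_isInternalAt_leaf : {p | IsInternalAt leaf p} = ∅ := by
  ext q
  simp [not_isInternalAt_leaf]

lemma finite_isLeafAt (t : PTree) : {p | IsLeafAt t p}.Finite := by
  induction t using PTree_induction with
  | h cs ih =>
  by_cases hcs : cs = []
  · subst hcs
    rw [setOf_isLeafAt_leaf]
    exact Set.finite_singleton _
  · rw [setOf_isLeafAt hcs]
    exact finite_childPaths _ _ fun j hj => ih _ (getD_mem hj)

lemma finite_isInternalAt (t : PTree) : {p | IsInternalAt t p}.Finite := by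
  induction t using PTree_induction with
  | h cs ih =>
  by_cases hcs : cs = []
  · subst hcs
    rw [setOf_isInternalAt_leaf]
    exact Set.finite_empty
  · rw [setOf_isInternalAt hcs]
    exact (finite_childPaths _ _ fun j hj => ih _ (getD_mem hj)).insert _

lemma numLeaves_leaf : numLeaves leaf = 1 := by
  have : numLeaves leaf = {p | IsLeafAt leaf p}.ncard := rfl
  rw [this, setOf_isLeafAt_leaf, Set.ncard_singleton]

lemma numLeaves_node {cs : List PTree} (hcs : cs ≠ []) :
    numLeaves (node cs) = leafOffset cs cs.length := by
  have : numLeaves (node cs) = {p | IsLeafAt (node cs) p}.ncard := rfl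
  rw [this, setOf_isLeafAt hcs, ncard_childPaths _ _ fun j _ => finite_isLeafAt _]
  rfl

lemma leafOffset_succ (cs : List PTree) (j : ℕ) :
    leafOffset cs (j + 1) = leafOffset cs j + numLeaves (cs.getD j leaf) :=
  sum_range_succ _ _

lemma leafOffset_cons_succ (c : PTree) (cs : List PTree) (j : ℕ) :
    leafOffset (c :: cs) (j + 1) = numLeaves c + leafOffset cs j := by
  rw [leafOffset, sum_range_succ']
  simp [leafOffset, add_comm]

lemma leafOffset_zero (cs : List PTree) : leafOffset cs 0 = 0 := rfl

lemma leafOffset_mono (cs : List PTree) : Monotone (leafOffset cs) :=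
  monotone_nat_of_le_succ fun j => by rw [leafOffset_succ]; omega

lemma one_le_numLeaves (t : PTree) : 1 ≤ numLeaves t := by
  induction t using PTree_induction with
  | h cs ih =>
  by_cases hcs : cs = []
  · subst hcs
    exact numLeaves_leaf.ge
  · rw [numLeaves_node hcs]
    have hpos := List.length_pos_iff.2 hcs
    have h1 := leafOffset_mono cs (Nat.succ_le_of_lt hpos)
    have h2 := ih _ (getD_mem hpos)
    rw [Nat.succ_eq_add_one, leafOffset_succ] at h1
    omega

lemma leavesBefore_nil (t : PTree) : leavesBefore t [] = 0 := by
  have : leavesBefore t [] =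
    {q | IsLeafAt t q ∧ List.Lex (· < ·) q [] ∧ ¬ [] <+: q}.ncard := rfl
  rw [this]
  simp

lemma leavesBefore_cons {cs : List PTree} {j : ℕ} (hj : j < cs.length) (p : List ℕ) :
    leavesBefore (node cs) (j :: p) = leafOffset cs j + leavesBefore (cs.getD j leaf) p := by
  have h1 : leavesBefore (node cs) (j :: p) =
    {q | IsLeafAt (node cs) q ∧ List.Lex (· < ·) q (j :: p) ∧ ¬ (j :: p) <+: q}.ncard := rfl
  have h2 : leavesBefore (cs.getD j leaf) p =
    {q | IsLeafAt (cs.getD j leaf) q ∧ List.Lex (· < ·) q p ∧ ¬ p <+: q}.ncard := rfl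
  have hset : {q | IsLeafAt (node cs) q ∧ List.Lex (· < ·) q (j :: p) ∧ ¬ (j :: p) <+: q} =
      childPaths (j + 1) fun i => if i < j then {q | IsLeafAt (cs.getD i leaf) q} else
        {q | IsLeafAt (cs.getD j leaf) q ∧ List.Lex (· < ·) q p ∧ ¬ p <+: q} := by
    ext q
    rcases q with _ | ⟨i, q⟩
    · have : cs ≠ [] := by
        rintro rfl
        simp at hj
      simp [isLeafAt_nil, this, childPaths]
    · simp only [Set.mem_ofPred_eq, isLeafAt_cons, childPaths, List.cons.injEq,
        List.cons_prefix_cons, List.cons_lex_cons_iff]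
      constructor
      · rintro ⟨⟨hi, hq⟩, hlex, hpre⟩
        rcases hlex with hlt | ⟨rfl, hlex⟩
        · exact ⟨i, by omega, q, by simpa [hlt] using hq, rfl, rfl⟩
        · exact ⟨i, by omega, q, by simpa using ⟨hq, hlex, by simpa using hpre⟩, rfl, rfl⟩
      · rintro ⟨_, hi, _, hq, rfl, rfl⟩
        rcases Nat.lt_succ_iff_lt_or_eq.1 hi with hlt | rfl
        · rw [if_pos hlt] at hq
          exact ⟨⟨by omega, hq⟩, Or.inl hlt, by omega⟩
        · rw [if_neg (lt_irrefl _)] at hq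
          exact ⟨⟨hj, hq.1⟩, Or.inr ⟨rfl, hq.2.1⟩, fun h => hq.2.2 h.2⟩
  rw [h1, h2, hset, ncard_childPaths, sum_range_succ, if_neg (lt_irrefl _)]
  · congr 1
    refine sum_congr rfl fun i hi => ?_
    rw [if_pos (mem_range.1 hi)]
    rfl
  · intro i _
    split_ifs
    · exact finite_isLeafAt _
    · exact (finite_isLeafAt _).subset fun q hq => hq.1

lemma subtree!_cons {cs : List PTree} {j : ℕ} (hj : j < cs.length) (p : List ℕ) :
    subtree! (node cs) (j :: p) = subtree! (cs.getD j leaf) p := by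
  rw [subtree!, subtreeAt_cons hj, subtree!]

lemma sectorIn_nil {t : PTree} {i : ℕ} : SectorIn t [] i ↔ i + 2 ≤ numLeaves t := by
  simp [SectorIn, leavesBefore_nil, subtree!, subtreeAt]

lemma sectorIn_cons {cs : List PTree} {j : ℕ} (hj : j < cs.length) {p : List ℕ} {i : ℕ} :
    SectorIn (node cs) (j :: p) i ↔
      leafOffset cs j ≤ i ∧ SectorIn (cs.getD j leaf) p (i - leafOffset cs j) := by
  rw [SectorIn, SectorIn, leavesBefore_cons hj, subtree!_cons hj]
  omega

lemma SectorIn.lt {t : PTree} {p : List ℕ} {i : ℕ} (hp : IsInternalAt t p)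
    (h : SectorIn t p i) : i + 2 ≤ numLeaves t := by
  induction p generalizing t i with
  | nil => exact sectorIn_nil.1 h
  | cons j p ih =>
    obtain ⟨cs⟩ := t
    have hj := lt_length_of_isInternalAt hp
    rw [sectorIn_cons hj] at h
    have h1 := ih (isInternalAt_cons.1 hp) h.2
    have h2 := leafOffset_mono cs (Nat.succ_le_of_lt hj)
    rw [Nat.succ_eq_add_one, leafOffset_succ] at h2
    rw [numLeaves_node (List.ne_nil_of_length_pos (by omega))]
    omega

lemma SectorIn.prefix_or {t : PTree} {v w : List ℕ} {i : ℕ} (hv : IsInternalAt t v)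
    (hw : IsInternalAt t w) (h : SectorIn t v i) (h' : SectorIn t w i) :
    v <+: w ∨ w <+: v := by
  induction v generalizing t w i with
  | nil => exact Or.inl List.nil_prefix
  | cons j v ih =>
    rcases w with _ | ⟨k, w⟩
    · exact Or.inr List.nil_prefix
    obtain ⟨cs⟩ := t
    rw [sectorIn_cons (lt_length_of_isInternalAt hv)] at h
    rw [sectorIn_cons (lt_length_of_isInternalAt hw)] at h'
    have h1 := SectorIn.lt (isInternalAt_cons.1 hv) h.2
    have h2 := SectorIn.lt (isInternalAt_cons.1 hw) h'.2
    obtain rfl : j = k := by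
      by_contra hne
      rcases Nat.lt_or_gt_of_ne hne with hlt | hlt
      · have := leafOffset_mono cs (Nat.succ_le_of_lt hlt)
        rw [Nat.succ_eq_add_one, leafOffset_succ] at this
        omega
      · have := leafOffset_mono cs (Nat.succ_le_of_lt hlt)
        rw [Nat.succ_eq_add_one, leafOffset_succ] at this
        omega
    simpa using ih (isInternalAt_cons.1 hv) (isInternalAt_cons.1 hw) h.2 h'.2

lemma OwnsSector.lt {t : PTree} {v : List ℕ} {i : ℕ} (h : OwnsSector t v i) :
    i + 2 ≤ numLeaves t :=
  SectorIn.lt h.1 h.2.1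

lemma OwnsSector.unique {t : PTree} {v w : List ℕ} {i : ℕ} (h : OwnsSector t v i)
    (h' : OwnsSector t w i) : v = w := by
  by_contra hne
  rcases SectorIn.prefix_or h.1 h'.1 h.2.1 h'.2.1 with hp | hp
  · exact h.2.2 w h'.1 hp (Ne.symm hne) h'.2.1
  · exact h'.2.2 v h.1 hp hne h.2.1

lemma ownsSector_cons {cs : List PTree} {j : ℕ} {v : List ℕ} {i : ℕ} :
    OwnsSector (node cs) (j :: v) i ↔
      leafOffset cs j ≤ i ∧ OwnsSector (cs.getD j leaf) v (i - leafOffset cs j) := by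
  by_cases hv : IsInternalAt (node cs) (j :: v)
  swap
  · rw [OwnsSector, OwnsSector, ← isInternalAt_cons]
    simp [hv]
  have hj := lt_length_of_isInternalAt hv
  rw [OwnsSector, OwnsSector, sectorIn_cons hj, isInternalAt_cons]
  constructor
  · rintro ⟨h1, ⟨h2, h3⟩, h4⟩
    refine ⟨h2, h1, h3, fun w hw hvw hne hs => ?_⟩
    exact h4 (j :: w) (isInternalAt_cons.2 hw) (by simpa using hvw) (by simpa using hne)
      ((sectorIn_cons hj).2 ⟨h2, hs⟩)
  · rintro ⟨h2, h1, h3, h4⟩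
    refine ⟨h1, ⟨h2, h3⟩, fun w hw hvw hne hs => ?_⟩
    rcases w with _ | ⟨k, w⟩
    · simp at hvw
    · rw [List.cons_prefix_cons] at hvw
      obtain ⟨rfl, hvw⟩ := hvw
      exact h4 w (isInternalAt_cons.1 hw) hvw (by simpa using hne) ((sectorIn_cons hj).1 hs).2

lemma isInternalAt_nil_of_two_le {t : PTree} (h : 2 ≤ numLeaves t) : IsInternalAt t [] := by
  obtain ⟨cs⟩ := t
  rw [isInternalAt_nil]
  rintro rfl
  rw [numLeaves_leaf] at h
  omega

lemma ownsSector_nil {cs : List PTree} (hcs : cs ≠ []) {i : ℕ} :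
    OwnsSector (node cs) [] i ↔ i + 2 ≤ leafOffset cs cs.length ∧
      ∀ j < cs.length, i < leafOffset cs j ∨ leafOffset cs (j + 1) < i + 2 := by
  rw [OwnsSector, sectorIn_nil, numLeaves_node hcs, isInternalAt_nil, and_iff_right hcs]
  refine and_congr_right fun hi => ?_
  constructor
  · intro h j hj
    by_contra hcon
    rw [leafOffset_succ] at hcon
    push Not at hcon
    refine h [j] (isInternalAt_cons.2 (isInternalAt_nil_of_two_le (by omega))) List.nil_prefix
      (by simp) ((sectorIn_cons hj).2 ⟨hcon.1, sectorIn_nil.2 ?_⟩)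
    omega
  · intro h w hw _ hne hs
    rcases w with _ | ⟨j, w⟩
    · exact hne rfl
    · have hj := lt_length_of_isInternalAt hw
      rw [sectorIn_cons hj] at hs
      have h1 := SectorIn.lt (isInternalAt_cons.1 hw) hs.2
      have h2 := h j hj
      rw [leafOffset_succ] at h2
      omega

lemma exists_ownsSector {t : PTree} {i : ℕ} (hi : i + 2 ≤ numLeaves t) :
    ∃ v, OwnsSector t v i := by
  induction t using PTree_induction generalizing i with
  | h cs ih =>
  have hcs : cs ≠ [] := isInternalAt_nil.1 (isInternalAt_nil_of_two_le (by omega))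
  by_cases hroot : OwnsSector (node cs) [] i
  · exact ⟨[], hroot⟩
  rw [ownsSector_nil hcs, ← numLeaves_node hcs, and_iff_right hi] at hroot
  push Not at hroot
  obtain ⟨j, hj, h1, h2⟩ := hroot
  rw [leafOffset_succ] at h2
  obtain ⟨v, hv⟩ := ih _ (getD_mem hj) (i := i - leafOffset cs j) (by omega)
  exact ⟨j :: v, ownsSector_cons.2 ⟨h1, hv⟩⟩

lemma isSchroder_node_iff {cs : List PTree} (hcs : cs ≠ []) :
    IsSchroder (node cs) ↔ 2 ≤ cs.length ∧ ∀ c ∈ cs, IsSchroder c := by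
  constructor
  · intro h
    cases h with
    | leaf => exact absurd rfl hcs
    | node _ h1 h2 => exact ⟨h1, h2⟩
  · exact fun h => .node cs h.1 h.2

lemma exists_sector_of_isInternalAt {t : PTree} (ht : IsSchroder t) {v : List ℕ}
    (hv : IsInternalAt t v) : ∃ i, OwnsSector t v i := by
  induction v generalizing t with
  | nil =>
    obtain ⟨cs⟩ := t
    have hcs := isInternalAt_nil.1 hv
    have hlen := ((isSchroder_node_iff hcs).1 ht).1
    have h1 : leafOffset cs 1 = leafOffset cs 0 + numLeaves (cs.getD 0 leaf) := leafOffset_succ cs 0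
    have h2 : leafOffset cs 2 = leafOffset cs 1 + numLeaves (cs.getD 1 leaf) := leafOffset_succ cs 1
    have h3 := leafOffset_mono cs hlen
    have h4 := one_le_numLeaves (cs.getD 0 leaf)
    have h5 := one_le_numLeaves (cs.getD 1 leaf)
    rw [leafOffset_zero] at h1
    refine ⟨numLeaves (cs.getD 0 leaf) - 1, (ownsSector_nil hcs).2 ⟨by omega, fun j _ => ?_⟩⟩
    rcases Nat.eq_zero_or_pos j with rfl | hpos
    · right
      rw [zero_add]
      omega
    · left
      have : leafOffset cs 1 ≤ leafOffset cs j := leafOffset_mono cs hpos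
      omega
  | cons j v ih =>
    obtain ⟨cs⟩ := t
    have hj := lt_length_of_isInternalAt hv
    have hcs : cs ≠ [] := List.ne_nil_of_length_pos (by omega)
    obtain ⟨i, hi⟩ := ih (((isSchroder_node_iff hcs).1 ht).2 _ (getD_mem hj))
      (isInternalAt_cons.1 hv)
    refine ⟨leafOffset cs j + i, ownsSector_cons.2 ⟨by omega, ?_⟩⟩
    rwa [Nat.add_sub_cancel_left]

end TreeVertices

section TreeMoments

open PTree

open Classical in
/-- The sectors owned by the vertex `v` of `t`, when the sectors of `t` are numbered from `g` on. -/
noncomputable def blockAt (g : ℕ) (t : PTree) (v : List ℕ) : Finset ℕ :=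
  (Ico g (g + numLeaves t)).filter fun i => OwnsSector t v (i - g)

lemma mem_blockAt {g : ℕ} {t : PTree} {v : List ℕ} {i : ℕ} :
    i ∈ blockAt g t v ↔ g ≤ i ∧ OwnsSector t v (i - g) := by
  classical
  rw [blockAt, mem_filter, mem_Ico]
  refine ⟨fun h => ⟨h.1.1, h.2⟩, fun h => ⟨⟨h.1, ?_⟩, h.2⟩⟩
  have := OwnsSector.lt h.2
  omega

lemma blockAt_cons (g : ℕ) (cs : List PTree) (j : ℕ) (v : List ℕ) :
    blockAt g (node cs) (j :: v) = blockAt (g + leafOffset cs j) (cs.getD j leaf) v := by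
  ext i
  rw [mem_blockAt, mem_blockAt, ownsSector_cons, Nat.sub_sub]
  have : g + leafOffset cs j ≤ i ↔ g ≤ i ∧ leafOffset cs j ≤ i - g := by omega
  rw [this, and_assoc]

lemma blockAt_singleton (g : ℕ) (c : PTree) : blockAt g (node [c]) [] = ∅ := by
  ext i
  rw [mem_blockAt, ownsSector_nil (List.cons_ne_nil _ _)]
  have h1 : leafOffset [c] 1 = numLeaves c := by simp [leafOffset]
  have h0 : leafOffset [c] 0 = 0 := rfl
  simp only [List.length_singleton, Nat.lt_one_iff, forall_eq, zero_add, h1, h0]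
  simp only [notMem_empty, iff_false]
  omega

lemma blockAt_cons_nil (g : ℕ) (c : PTree) {cs : List PTree} (hcs : cs ≠ []) :
    blockAt g (node (c :: cs)) [] =
      insert (g + numLeaves c - 1) (blockAt (g + numLeaves c) (node cs) []) := by
  ext i
  have hc := one_le_numLeaves c
  have hpos := List.length_pos_iff.2 hcs
  have h1 := leafOffset_mono cs (Nat.succ_le_of_lt hpos)
  rw [Nat.succ_eq_add_one, leafOffset_succ] at h1
  have h2 := one_le_numLeaves (cs.getD 0 leaf)
  rw [mem_insert, mem_blockAt, mem_blockAt, ownsSector_nil (List.cons_ne_nil _ _),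
    ownsSector_nil hcs, List.length_cons, Nat.forall_lt_succ_left, leafOffset_cons_succ,
    leafOffset_cons_succ, leafOffset_zero, leafOffset_zero]
  simp only [leafOffset_cons_succ]
  constructor
  · rintro ⟨hg, h3, h4, h5⟩
    rcases eq_or_ne i (g + numLeaves c - 1) with rfl | hne
    · exact Or.inl rfl
    · refine Or.inr ⟨by omega, by omega, fun j hj => ?_⟩
      have := h5 j hj
      omega
  · rintro (rfl | ⟨hg, h3, h4⟩)
    · exact ⟨by omega, by omega, by omega, fun j hj => by omega⟩
    · refine ⟨by omega, by omega, by omega, fun j hj => ?_⟩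
      have := h4 j hj
      omega

/-- The product of `f` over the blocks of the partition of the sectors of `t`. -/
noncomputable def treePhi (f : Finset ℕ → ℂ) (g : ℕ) (t : PTree) : ℂ :=
  ∏ᶠ v ∈ {v | IsInternalAt t v}, f (blockAt g t v)

/-- The product of `treePhi` over the trees of a forest. -/
noncomputable def forestPhi (f : Finset ℕ → ℂ) (g : ℕ) (cs : List PTree) : ℂ :=
  ∏ j ∈ range cs.length, treePhi f (g + leafOffset cs j) (cs.getD j leaf)

lemma treePhi_leaf (f : Finset ℕ → ℂ) (g : ℕ) : treePhi f g leaf = 1 := by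
  rw [treePhi, setOf_isInternalAt_leaf, finprod_mem_empty]

lemma treePhi_node (f : Finset ℕ → ℂ) (g : ℕ) {cs : List PTree} (hcs : cs ≠ []) :
    treePhi f g (node cs) = f (blockAt g (node cs) []) * forestPhi f g cs := by
  rw [treePhi, setOf_isInternalAt hcs, finprod_mem_insert, finprod_childPaths]
  · simp only [blockAt_cons]
    rfl
  · exact fun j _ => finite_isInternalAt _
  · simp [childPaths]
  · exact finite_childPaths _ _ fun j _ => finite_isInternalAt _

lemma forestPhi_nil (f : Finset ℕ → ℂ) (g : ℕ) : forestPhi f g [] = 1 := rfl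

lemma forestPhi_cons (f : Finset ℕ → ℂ) (g : ℕ) (c : PTree) (cs : List PTree) :
    forestPhi f g (c :: cs) = treePhi f g c * forestPhi f (g + numLeaves c) cs := by
  rw [forestPhi, List.length_cons, prod_range_succ', mul_comm, forestPhi]
  simp only [leafOffset_cons_succ, leafOffset_zero, add_zero, List.getD_cons_zero,
    List.getD_cons_succ, add_assoc]

/-- Strictly order-preserving maps from the internal vertices of `t` to `Fin N`. -/
def StrictMap (t : PTree) (N : ℕ) : Type :=
  {f : {p : List ℕ // IsInternalAt t p} → Fin N // ∀ v w, v.1 <+: w.1 → v ≠ w → f v < f w}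

/-- The number of strictly order-preserving maps from the internal vertices of `t` to `Fin N`. -/
noncomputable def strictMaps (t : PTree) (N : ℕ) : ℕ := Nat.card (StrictMap t N)

/-- The product of `strictMaps` over the trees of a forest. -/
noncomputable def forestMaps (cs : List PTree) (N : ℕ) : ℕ :=
  ∏ j ∈ range cs.length, strictMaps (cs.getD j leaf) N

lemma forestMaps_nil (N : ℕ) : forestMaps [] N = 1 := rfl

lemma forestMaps_cons (c : PTree) (cs : List PTree) (N : ℕ) :
    forestMaps (c :: cs) N = strictMaps c N * forestMaps cs N := by
  rw [forestMaps, List.length_cons, prod_range_succ', mul_comm, forestMaps]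
  rfl

lemma strictMaps_leaf (N : ℕ) : strictMaps leaf N = 1 := by
  have : IsEmpty {p : List ℕ // IsInternalAt leaf p} := ⟨fun p => not_isInternalAt_leaf _ p.2⟩
  rw [strictMaps, Nat.card_eq_one_iff_unique]
  exact ⟨⟨fun f f' => Subtype.ext (funext fun p => isEmptyElim p)⟩,
    ⟨⟨fun p => isEmptyElim p, fun p => isEmptyElim p⟩⟩⟩

lemma strictMaps_node_zero {cs : List PTree} (hcs : cs ≠ []) : strictMaps (node cs) 0 = 0 := by
  have : IsEmpty (StrictMap (node cs) 0) :=
    ⟨fun f => (f.1 ⟨[], isInternalAt_nil.2 hcs⟩).elim0⟩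
  exact Nat.card_of_isEmpty

/-- A strict map to `Fin (N + 1)` not attaining `0` is a strict map to `Fin N`. -/
noncomputable def strictMapSuccEquiv {cs : List PTree} (hcs : cs ≠ []) (N : ℕ) :
    {f : StrictMap (node cs) (N + 1) // f.1 ⟨[], isInternalAt_nil.2 hcs⟩ ≠ 0} ≃
      StrictMap (node cs) N where
  toFun f := ⟨fun v => (f.1.1 v).pred (by
      by_cases hv : (⟨[], isInternalAt_nil.2 hcs⟩ : {p // IsInternalAt (node cs) p}) = v
      · exact hv ▸ f.2
      · exact ((Fin.zero_le _).trans_lt (f.1.2 _ _ List.nil_prefix hv)).ne'),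
    fun v w h1 h2 => by
      rw [Fin.pred_lt_pred_iff]
      exact f.1.2 v w h1 h2⟩
  invFun f := ⟨⟨fun v => (f.1 v).succ, fun v w h1 h2 => Fin.succ_lt_succ_iff.2 (f.2 v w h1 h2)⟩,
    Fin.succ_ne_zero _⟩
  left_inv f := Subtype.ext (Subtype.ext (funext fun v => by simp))
  right_inv f := Subtype.ext (funext fun v => by simp)

/-- A strict map to `Fin (N + 1)` attaining `0` at the root amounts to strict maps to `Fin N` on the
children of the root. -/
noncomputable def strictMapZeroEquiv {cs : List PTree} (hcs : cs ≠ []) (N : ℕ) :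
    {f : StrictMap (node cs) (N + 1) // f.1 ⟨[], isInternalAt_nil.2 hcs⟩ = 0} ≃
      ∀ j : Fin cs.length, StrictMap (cs.getD j leaf) N where
  toFun f j := ⟨fun v => (f.1.1 ⟨j :: v.1, isInternalAt_cons.2 v.2⟩).pred
      ((Fin.zero_le _).trans_lt (f.1.2 ⟨[], isInternalAt_nil.2 hcs⟩ _ List.nil_prefix
        (by simp))).ne',
    fun v w h1 h2 => by
      rw [Fin.pred_lt_pred_iff]
      exact f.1.2 _ _ (by simpa using h1) (by simpa [Subtype.ext_iff] using h2)⟩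
  invFun F := ⟨⟨fun v => match v with
      | ⟨[], _⟩ => 0
      | ⟨j :: p, h⟩ => ((F ⟨j, lt_length_of_isInternalAt h⟩).1 ⟨p, isInternalAt_cons.1 h⟩).succ,
    by
      rintro ⟨_ | ⟨j, v⟩, hv⟩ ⟨_ | ⟨k, w⟩, hw⟩ h1 h2
      · simp at h2
      · exact Fin.succ_pos _
      · simp at h1
      · simp only [List.cons_prefix_cons] at h1
        obtain ⟨rfl, h1⟩ := h1
        refine Fin.succ_lt_succ_iff.2 ((F ⟨j, _⟩).2 _ _ h1 ?_)
        simpa [Subtype.ext_iff] using h2⟩, rfl⟩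
  left_inv f := by
    refine Subtype.ext (Subtype.ext (funext ?_))
    rintro ⟨_ | ⟨j, p⟩, h⟩
    · exact f.2.symm
    · simp
  right_inv F := funext fun j => Subtype.ext (funext fun v => by simp)

instance finite_strictMap (t : PTree) (N : ℕ) : Finite (StrictMap t N) := by
  have : Finite {p : List ℕ // IsInternalAt t p} := finite_isInternalAt t
  exact Subtype.finite

lemma strictMaps_node_succ {cs : List PTree} (hcs : cs ≠ []) (N : ℕ) :
    strictMaps (node cs) (N + 1) = strictMaps (node cs) N + forestMaps cs N := by
  classical
  rw [strictMaps, strictMaps, ← Nat.card_congr (strictMapSuccEquiv hcs N), forestMaps,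
    ← Fin.prod_univ_eq_prod_range fun j => strictMaps (cs.getD j leaf) N]
  simp only [strictMaps]
  rw [← Nat.card_pi, ← Nat.card_congr (strictMapZeroEquiv hcs N), ← Nat.card_sum]
  exact Nat.card_congr ((Equiv.sumComm _ _).trans (Equiv.sumCompl _)).symm

end TreeMoments

section OrderPolynomials

open PTree

/-- Strictly monotone maps with image `S` are the surjective strictly monotone maps onto
`{1, …, |S|}`. -/
noncomputable def monoImageEquiv {V : Type*} [Fintype V] (r : V → V → Prop) {N : ℕ}
    (S : Finset (Fin N)) :
    {f : {f : V → Fin N // ∀ v w, r v w → f v < f w} // univ.image f.1 = S} ≃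
      {f : V → Fin S.card // Function.Surjective f ∧ ∀ v w, r v w → f v < f w} where
  toFun f := ⟨fun v => (S.orderIsoOfFin rfl).symm ⟨f.1.1 v,
      f.2.subset (mem_image_of_mem _ (mem_univ v))⟩,
    by
      intro i
      obtain ⟨v, -, hv⟩ := mem_image.1 (f.2.superset (S.orderIsoOfFin rfl i).2)
      refine ⟨v, ?_⟩
      rw [OrderIso.symm_apply_eq]
      exact Subtype.ext hv,
    by
      intro v w hvw
      rw [OrderIso.lt_iff_lt]
      exact f.1.2 v w hvw⟩
  invFun f := ⟨⟨fun v => S.orderIsoOfFin rfl (f.1 v), fun v w hvw => by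
      rw [Subtype.coe_lt_coe, OrderIso.lt_iff_lt]
      exact f.2.2 v w hvw⟩, by
    ext i
    simp only [mem_image, mem_univ, true_and]
    constructor
    · rintro ⟨v, rfl⟩
      exact Subtype.coe_prop _
    · intro hi
      obtain ⟨v, hv⟩ := f.2.1 ((S.orderIsoOfFin rfl).symm ⟨i, hi⟩)
      exact ⟨v, by rw [hv, OrderIso.apply_symm_apply]⟩⟩
  left_inv f := Subtype.ext (Subtype.ext (funext fun v => by simp))
  right_inv f := Subtype.ext (funext fun v => (S.orderIsoOfFin rfl).symm_apply_apply _)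

lemma card_mono_eq_sum_surjective {V : Type*} [Fintype V] (r : V → V → Prop) (N : ℕ) :
    Nat.card {f : V → Fin N // ∀ v w, r v w → f v < f w} =
      ∑ k ∈ range (N + 1), N.choose k *
        Nat.card {f : V → Fin k // Function.Surjective f ∧ ∀ v w, r v w → f v < f w} := by
  rw [← Nat.card_congr (Equiv.sigmaFiberEquiv
      fun f : {f : V → Fin N // ∀ v w, r v w → f v < f w} => univ.image f.1), Nat.card_sigma]
  simp only [Nat.card_congr (monoImageEquiv r _)]
  have := sum_powerset_apply_card (fun k => Nat.card {f : V → Fin k //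
    Function.Surjective f ∧ ∀ v w, r v w → f v < f w}) (x := (univ : Finset (Fin N)))
  simpa using this

lemma omegaSkK_eq_zero {t : PTree} {k : ℕ} (hk : numInternal t < k) : omegaSkK t k = 0 := by
  have : Finite {p : List ℕ // IsInternalAt t p} := finite_isInternalAt t
  rw [omegaSkK, Nat.card_eq_zero]
  refine Or.inl ⟨fun f => ?_⟩
  have := Nat.card_le_card_of_surjective _ f.2.1
  rw [Nat.card_fin] at this
  exact absurd hk (not_lt.2 this)

/-- The polynomial counting strictly order-preserving maps from the internal vertices of `t`. -/
noncomputable def omegaPoly (t : PTree) : ℂ[X] :=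
  ∑ k ∈ range (numInternal t + 1), C ((omegaSkK t k : ℂ) / (k.factorial : ℂ)) * descPochhammer ℂ k

lemma strictMaps_eq_sum (t : PTree) (N : ℕ) :
    strictMaps t N = ∑ k ∈ range (N + 1), N.choose k * omegaSkK t k := by
  have : Fintype {p : List ℕ // IsInternalAt t p} := (finite_isInternalAt t).fintype
  have h := card_mono_eq_sum_surjective
    (fun v w : {p : List ℕ // IsInternalAt t p} => v.1 <+: w.1 ∧ v ≠ w) N
  simp only [and_imp] at h
  exact h

lemma eval_omegaPoly (t : PTree) (N : ℕ) : (omegaPoly t).eval (N : ℂ) = strictMaps t N := by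
  have h1 : ∑ k ∈ range (N + 1), N.choose k * omegaSkK t k =
      ∑ k ∈ range (max N (numInternal t) + 1), N.choose k * omegaSkK t k := by
    refine sum_subset (fun k hk => ?_) fun k _ hk => ?_
    · rw [mem_range] at *
      omega
    · rw [mem_range] at hk
      rw [Nat.choose_eq_zero_of_lt (by omega), zero_mul]
  have h2 : ∑ k ∈ range (numInternal t + 1), N.choose k * omegaSkK t k =
      ∑ k ∈ range (max N (numInternal t) + 1), N.choose k * omegaSkK t k := by
    refine sum_subset (fun k hk => ?_) fun k _ hk => ?_
    · rw [mem_range] at *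
      omega
    · rw [mem_range] at hk
      rw [omegaSkK_eq_zero (by omega), mul_zero]
  rw [strictMaps_eq_sum, h1, ← h2, omegaPoly, eval_finsetSum, Nat.cast_sum]
  refine sum_congr rfl fun k _ => ?_
  rw [eval_mul, eval_C, descPochhammer_eval_eq_descFactorial,
    Nat.descFactorial_eq_factorial_mul_choose, Nat.cast_mul, Nat.cast_mul]
  have : (k.factorial : ℂ) ≠ 0 := Nat.cast_ne_zero.2 k.factorial_ne_zero
  field_simp

lemma eval_neg_one_descPochhammer (k : ℕ) :
    (descPochhammer ℂ k).eval (-1) = (-1) ^ k * (k.factorial : ℂ) := by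
  induction k with
  | zero => simp
  | succ k ih =>
    rw [descPochhammer_succ_eval, ih, Nat.factorial_succ]
    push_cast
    ring

lemma eval_zero_derivative_descPochhammer (k : ℕ) :
    (derivative (descPochhammer ℂ (k + 1))).eval 0 = (-1) ^ k * (k.factorial : ℂ) := by
  rw [descPochhammer_succ_left, derivative_mul]
  simp [eval_comp, eval_neg_one_descPochhammer]

lemma eval_zero_derivative_omegaPoly (t : PTree) :
    (derivative (omegaPoly t)).eval 0 = omegaSk t := by
  have hI : Icc 1 (numInternal t) = Ico 1 (numInternal t + 1) := by
    ext
    simp only [mem_Icc, mem_Ico]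
    omega
  rw [omegaPoly, derivative_sum, eval_finsetSum, omegaSk, sum_range_succ', hI,
    sum_Ico_eq_sum_range, Nat.add_sub_cancel, descPochhammer_zero, mul_one, derivative_C, eval_zero,
    add_zero]
  refine sum_congr rfl fun k _ => ?_
  rw [derivative_C_mul, eval_C_mul, eval_zero_derivative_descPochhammer, Nat.factorial_succ,
    add_comm 1 k, pow_add, pow_add]
  have : (k.factorial : ℂ) ≠ 0 := Nat.cast_ne_zero.2 k.factorial_ne_zero
  have : (k : ℂ) + 1 ≠ 0 := Nat.cast_add_one_ne_zero k
  push_cast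
  field_simp

end OrderPolynomials

section SchroderSums

open PTree

/-- Forests of at least `l` Schröder trees with `m + 1` leaves in total. -/
def forestSet (l m : ℕ) : Set (List PTree) :=
  {cs | l ≤ cs.length ∧ (∀ c ∈ cs, IsSchroder c) ∧ leafOffset cs cs.length = m + 1}

lemma cons_mem_forestSet_two {m : ℕ} {c : PTree} {cs : List PTree} :
    c :: cs ∈ forestSet 2 m ↔ ∃ k < m, c ∈ ST k ∧ cs ∈ forestSet 1 (m - 1 - k) := by
  simp only [forestSet, PTree.ST, Set.mem_ofPred_eq, List.mem_cons, forall_eq_or_imp, List.length_cons,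
    leafOffset_cons_succ]
  constructor
  · rintro ⟨h1, ⟨h2, h3⟩, h4⟩
    have h5 := one_le_numLeaves c
    have h6 := one_le_numLeaves (node cs)
    rw [numLeaves_node (List.ne_nil_of_length_pos (by omega))] at h6
    exact ⟨numLeaves c - 1, by omega, ⟨h2, by omega⟩, by omega, h3, by omega⟩
  · rintro ⟨k, hk, ⟨h1, h2⟩, h3, h4, h5⟩
    exact ⟨by omega, ⟨h1, h4⟩, by omega⟩

lemma singleton_mem_forestSet_one {m : ℕ} {c : PTree} : [c] ∈ forestSet 1 m ↔ c ∈ ST m := by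
  simp [forestSet, PTree.ST, leafOffset]

lemma node_mem_ST {m : ℕ} {cs : List PTree} (hcs : cs ≠ []) :
    node cs ∈ ST m ↔ cs ∈ forestSet 2 m := by
  rw [PTree.ST, Set.mem_ofPred_eq, isSchroder_node_iff hcs, numLeaves_node hcs, and_assoc]
  rfl

lemma leaf_mem_ST {m : ℕ} : leaf ∈ ST m ↔ m = 0 := by
  rw [PTree.ST, Set.mem_ofPred_eq, numLeaves_leaf, and_iff_right IsSchroder.leaf]
  omega

lemma forestSet_two_subset (m : ℕ) :
    forestSet 2 m ⊆ ⋃ k ∈ Set.Iio m, Set.image2 List.cons (ST k) (forestSet 1 (m - 1 - k)) := by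
  rintro (_ | ⟨c, cs⟩) h
  · exact absurd h.1 (by simp)
  · obtain ⟨k, hk, h1, h2⟩ := cons_mem_forestSet_two.1 h
    exact Set.mem_biUnion hk ⟨c, h1, cs, h2, rfl⟩

lemma ST_subset (m : ℕ) : ST m ⊆ insert leaf (node '' forestSet 2 m) := by
  rintro ⟨cs⟩ h
  by_cases hcs : cs = []
  · exact Or.inl (by rw [hcs])
  · exact Or.inr ⟨cs, (node_mem_ST hcs).1 h, rfl⟩

lemma forestSet_one_subset (m : ℕ) :
    forestSet 1 m ⊆ (fun c => [c]) '' ST m ∪ forestSet 2 m := by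
  rintro (_ | ⟨c, _ | ⟨c', cs⟩⟩) h
  · exact absurd h.1 (by simp)
  · exact Or.inl ⟨c, singleton_mem_forestSet_one.1 h, rfl⟩
  · exact Or.inr ⟨by simp, h.2⟩

lemma finite_ST_and_forestSet (m : ℕ) :
    (ST m).Finite ∧ (forestSet 2 m).Finite ∧ (forestSet 1 m).Finite := by
  induction m using Nat.strong_induction_on with
  | _ m ih =>
  have h2 : (forestSet 2 m).Finite := by
    refine Set.Finite.subset ((Set.finite_Iio m).biUnion fun k hk => ?_) (forestSet_two_subset m)
    rw [Set.mem_Iio] at hk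
    exact (ih k hk).1.image2 _ (ih (m - 1 - k) (by omega)).2.2
  have h0 : (ST m).Finite := ((h2.image node).insert leaf).subset (ST_subset m)
  exact ⟨h0, h2, ((h0.image _).union h2).subset (forestSet_one_subset m)⟩

/-- The Schröder trees with `m + 1` leaves. -/
noncomputable def schroderTrees (m : ℕ) : Finset PTree := (finite_ST_and_forestSet m).1.toFinset

/-- The forests of at least two Schröder trees with `m + 1` leaves in total. -/
noncomputable def longForests (m : ℕ) : Finset (List PTree) :=
  (finite_ST_and_forestSet m).2.1.toFinset

/-- The nonempty forests of Schröder trees with `m + 1` leaves in total. -/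
noncomputable def forests (m : ℕ) : Finset (List PTree) :=
  (finite_ST_and_forestSet m).2.2.toFinset

lemma mem_schroderTrees {m : ℕ} {t : PTree} : t ∈ schroderTrees m ↔ t ∈ ST m :=
  Set.Finite.mem_toFinset _

lemma mem_longForests {m : ℕ} {cs : List PTree} : cs ∈ longForests m ↔ cs ∈ forestSet 2 m :=
  Set.Finite.mem_toFinset _

lemma mem_forests {m : ℕ} {cs : List PTree} : cs ∈ forests m ↔ cs ∈ forestSet 1 m :=
  Set.Finite.mem_toFinset _

lemma ne_nil_of_mem_forests {m : ℕ} {cs : List PTree} (h : cs ∈ forests m) : cs ≠ [] :=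
  List.ne_nil_of_length_pos (mem_forests.1 h).1

lemma ne_nil_of_mem_longForests {m : ℕ} {cs : List PTree} (h : cs ∈ longForests m) : cs ≠ [] :=
  List.ne_nil_of_length_pos (Nat.lt_of_succ_lt (mem_longForests.1 h).1)

lemma numLeaves_of_mem_schroderTrees {m : ℕ} {t : PTree} (h : t ∈ schroderTrees m) :
    numLeaves t = m + 1 :=
  (mem_schroderTrees.1 h).2

lemma sum_longForests (m : ℕ) (F : List PTree → ℂ) :
    ∑ cs ∈ longForests m, F cs =
      ∑ k ∈ range m, ∑ c ∈ schroderTrees k, ∑ cs ∈ forests (m - 1 - k), F (c :: cs) := by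
  simp only [← sum_product']
  rw [sum_sigma']
  refine (sum_nbij (fun x : (_ : ℕ) × PTree × List PTree => x.2.1 :: x.2.2) ?_ ?_ ?_ fun _ _ => rfl).symm
  · rintro ⟨k, c, cs⟩ h
    simp only [mem_sigma, mem_range, mem_product, mem_schroderTrees, mem_forests] at h
    exact mem_longForests.2 (cons_mem_forestSet_two.2 ⟨k, h⟩)
  · rintro ⟨k, c, cs⟩ h ⟨k', c', cs'⟩ h' heq
    simp only [coe_sigma, Set.mem_sigma_iff, mem_coe, mem_product] at h h'
    simp only [List.cons.injEq] at heq
    obtain ⟨rfl, rfl⟩ := heq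
    have h1 := numLeaves_of_mem_schroderTrees h.2.1
    have h2 := numLeaves_of_mem_schroderTrees h'.2.1
    obtain rfl : k = k' := by omega
    rfl
  · rintro (_ | ⟨c, cs⟩) h
    · exact absurd rfl (ne_nil_of_mem_longForests h)
    · obtain ⟨k, hk⟩ := cons_mem_forestSet_two.1 (mem_longForests.1 h)
      refine ⟨⟨k, c, cs⟩, ?_, rfl⟩
      simpa only [coe_sigma, Set.mem_sigma_iff, mem_coe, mem_product, mem_range, mem_schroderTrees,
        mem_forests] using hk

lemma sum_forests (m : ℕ) (F : List PTree → ℂ) :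
    ∑ cs ∈ forests m, F cs = ∑ c ∈ schroderTrees m, F [c] + ∑ cs ∈ longForests m, F cs := by
  classical
  rw [← sum_image (f := F) (g := fun c => [c]) (fun _ _ _ _ h => List.singleton_injective h),
    ← sum_union]
  · refine sum_congr (Subset.antisymm (fun cs h => ?_) fun cs h => ?_) fun _ _ => rfl
    · rw [mem_union, mem_image, mem_longForests]
      simpa only [mem_schroderTrees, Set.mem_union, Set.mem_image] using forestSet_one_subset m (mem_forests.1 h)
    · rw [mem_union, mem_image, mem_longForests] at h
      rcases h with ⟨c, hc, rfl⟩ | h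
      · exact mem_forests.2 (singleton_mem_forestSet_one.2 (mem_schroderTrees.1 hc))
      · exact mem_forests.2 ⟨Nat.le_of_succ_le h.1, h.2⟩
  · rw [disjoint_left]
    intro cs h h'
    obtain ⟨c, -, rfl⟩ := mem_image.1 h
    exact absurd (mem_longForests.1 h').1 (by simp)

lemma sum_schroderTrees (m : ℕ) (F : PTree → ℂ) :
    ∑ t ∈ schroderTrees m, F t =
      (if m = 0 then F leaf else 0) + ∑ cs ∈ longForests m, F (node cs) := by
  classical
  have hinj : Function.Injective node := fun _ _ h => by injection h
  have h1 : (if m = 0 then F leaf else 0) =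
      ∑ t ∈ ((if m = 0 then {leaf} else ∅ : Finset PTree)), F t := by
    split_ifs <;> simp
  rw [h1, ← sum_image (f := F) (g := node) (fun _ _ _ _ h => hinj h), ← sum_union]
  · refine sum_congr (Finset.ext fun t => ?_) fun _ _ => rfl
    obtain ⟨cs⟩ := t
    rw [mem_schroderTrees, mem_union, hinj.mem_finset_image, mem_longForests]
    by_cases hcs : cs = []
    · subst hcs
      have : ([] : List PTree) ∉ forestSet 2 m := fun h => absurd h.1 (by simp)
      rw [leaf_mem_ST, or_iff_left this]
      split_ifs <;> simp_all
    · rw [node_mem_ST hcs]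
      split_ifs <;> simp [leaf, hcs]
  · rw [disjoint_left]
    intro t h h'
    obtain ⟨cs, hcs, rfl⟩ := mem_image.1 h'
    split_ifs at h
    · exact ne_nil_of_mem_longForests hcs (hinj (mem_singleton.1 h))
    · simp at h

lemma sum_powerset_Ico (G : Finset ℕ → ℂ) (g m : ℕ) :
    ∑ S ∈ (Ico g (g + m)).powerset, G S =
      G ∅ + ∑ k ∈ range m, ∑ S ∈ (Ico (g + k + 1) (g + m)).powerset, G (insert (g + k) S) := by
  induction m generalizing g with
  | zero => simp
  | succ m ih =>
    have h1 : Ico g (g + (m + 1)) = insert g (Ico (g + 1) (g + 1 + m)) := by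
      ext
      simp only [mem_insert, mem_Ico]
      omega
    have h2 : g ∉ Ico (g + 1) (g + 1 + m) := by simp
    rw [h1, sum_powerset_insert h2, ih, sum_range_succ', add_zero, add_assoc]
    simp only [add_assoc, add_comm 1]

variable (f h : Finset ℕ → ℂ)

/-- A sum over root blocks whose remaining letters form noncrossing partitions. -/
noncomputable def blockSum (N : ℕ) (p : Finset ℕ) (g m : ℕ) : ℂ :=
  ∑ S ∈ (Ico g (g + m)).powerset, f (p ∪ S) * (ncPoly h (Ico g (g + m) \ S) S).eval (N : ℂ)

/-- A sum over forests of Schröder trees grafted to a common root. -/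
noncomputable def forestSum (N : ℕ) (p : Finset ℕ) (g m : ℕ) : ℂ :=
  ∑ cs ∈ forests m,
    f (p ∪ blockAt g (node cs) []) * ((forestMaps cs N : ℂ) * forestPhi f g cs)

/-- The sum over Schröder trees with `m + 1` leaves counting strict maps to `Fin N`. -/
noncomputable def treeSum (N g m : ℕ) : ℂ :=
  ∑ t ∈ schroderTrees m, (strictMaps t N : ℂ) * treePhi f g t

lemma blockSum_eq (N : ℕ) (p : Finset ℕ) (g m : ℕ) :
    blockSum f h N p g m = f p * (ncPoly h (Ico g (g + m)) ∅).eval (N : ℂ) +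
      ∑ k ∈ range m, (ncPoly h (Ico g (g + k)) ∅).eval (N : ℂ) *
        blockSum f h N (insert (g + k) p) (g + k + 1) (m - 1 - k) := by
  rw [blockSum, sum_powerset_Ico, union_empty, sdiff_empty]
  congr 1
  refine sum_congr rfl fun k hk => ?_
  rw [mem_range] at hk
  rw [blockSum, mul_sum, show g + k + 1 + (m - 1 - k) = g + m by omega]
  refine sum_congr rfl fun S hS => ?_
  rw [mem_powerset] at hS
  have hS' : ∀ s ∈ S, g + k < s := fun s hs => by
    have := mem_Ico.1 (hS hs)
    omega
  have h1 : Ico g (g + m) \ insert (g + k) S = Ico g (g + k) ∪ (Ico (g + k + 1) (g + m) \ S) := by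
    ext i
    simp only [mem_sdiff, mem_insert, mem_union, mem_Ico]
    have := hS' i
    by_cases hi : i ∈ S
    · have := this hi
      simp only [hi, or_true, not_true, and_false, or_false, false_iff]
      omega
    · simp only [hi, or_false, not_false_iff, and_true]
      omega
  rw [h1, ncPoly_split, eval_mul, union_insert, insert_union]
  · ring
  · exact fun y hy => (mem_Ico.1 hy).2
  · intro z hz
    have := mem_Ico.1 (mem_sdiff.1 hz).1
    omega
  · exact hS'

lemma forestSum_eq (N : ℕ) (p : Finset ℕ) (g m : ℕ) :
    forestSum f N p g m = f p * treeSum f N g m +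
      ∑ k ∈ range m, treeSum f N g k *
        forestSum f N (insert (g + k) p) (g + k + 1) (m - 1 - k) := by
  rw [forestSum, sum_forests, sum_longForests, treeSum, mul_sum]
  congr 1
  · refine sum_congr rfl fun c _ => ?_
    rw [blockAt_singleton, union_empty, forestMaps_cons, forestMaps_nil, forestPhi_cons,
      forestPhi_nil, mul_one, mul_one]
  · refine sum_congr rfl fun k _ => ?_
    rw [treeSum, forestSum, sum_mul_sum]
    refine sum_congr rfl fun c hc => sum_congr rfl fun cs hcs => ?_
    rw [blockAt_cons_nil g c (ne_nil_of_mem_forests hcs), numLeaves_of_mem_schroderTrees hc,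
      forestMaps_cons, forestPhi_cons, numLeaves_of_mem_schroderTrees hc, union_insert,
      insert_union, show g + (k + 1) - 1 = g + k by omega, ← add_assoc, Nat.cast_mul]
    ring

lemma blockSum_eq_forestSum {N : ℕ}
    (hN : ∀ g m, (ncPoly h (Ico g (g + m)) ∅).eval (N : ℂ) = treeSum f N g m) (p : Finset ℕ)
    (g m : ℕ) : blockSum f h N p g m = forestSum f N p g m := by
  induction m using Nat.strong_induction_on generalizing p g with
  | _ m ih =>
  rw [blockSum_eq, forestSum_eq, hN]
  congr 1
  refine sum_congr rfl fun k hk => ?_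
  rw [mem_range] at hk
  rw [hN, ih _ (by omega)]

lemma treeSum_zero (g m : ℕ) : treeSum f 0 g m = if m = 0 then 1 else 0 := by
  rw [treeSum, sum_schroderTrees, strictMaps_leaf, treePhi_leaf, sum_eq_zero]
  · simp
  · intro cs hcs
    rw [strictMaps_node_zero (ne_nil_of_mem_longForests hcs)]
    simp

lemma treeSum_succ (hf : f ∅ = 1) (N g m : ℕ) : treeSum f (N + 1) g m = forestSum f N ∅ g m := by
  rw [forestSum, sum_forests, treeSum, sum_schroderTrees]
  have h1 : ∑ c ∈ schroderTrees m,
      f (∅ ∪ blockAt g (node [c]) []) * ((forestMaps [c] N : ℂ) * forestPhi f g [c]) =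
      ∑ c ∈ schroderTrees m, (strictMaps c N : ℂ) * treePhi f g c := by
    refine sum_congr rfl fun c _ => ?_
    rw [blockAt_singleton, union_empty, forestMaps_cons, forestMaps_nil, forestPhi_cons,
      forestPhi_nil, mul_one, mul_one, hf, one_mul]
  rw [h1, sum_schroderTrees, strictMaps_leaf, strictMaps_leaf, add_assoc, ← sum_add_distrib]
  congr 1
  refine sum_congr rfl fun cs hcs => ?_
  have := ne_nil_of_mem_longForests hcs
  rw [strictMaps_node_succ this, treePhi_node _ _ this, empty_union, Nat.cast_add]
  ring

theorem eval_ncPoly_eq_treeSum (hf : f ∅ = 1) (hfh : ∀ T, (ncPoly h T ∅).eval 1 = f T)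
    (N g m : ℕ) : (ncPoly h (Ico g (g + m)) ∅).eval (N : ℂ) = treeSum f N g m := by
  induction N generalizing g m with
  | zero =>
    rw [Nat.cast_zero, eval_zero_ncPoly, treeSum_zero]
    simp
  | succ N ih =>
    rw [Nat.cast_succ, eval_add_one_ncPoly, treeSum_succ f hf, ← blockSum_eq_forestSum f h ih,
      blockSum]
    simp only [hfh, empty_union]

theorem eq_sum_schroderTrees (hf : f ∅ = 1) (hfh : ∀ T, (ncPoly h T ∅).eval 1 = f T) {n : ℕ}
    (hn : 1 ≤ n) : h (range n) = ∑ t ∈ schroderTrees n, omegaSk t * treePhi f 0 t := by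
  have key : ncPoly h (Ico 0 (0 + n)) ∅ =
      ∑ t ∈ schroderTrees n, omegaPoly t * C (treePhi f 0 t) := by
    refine eq_of_infinite_eval_eq _ _
      ((Set.infinite_range_of_injective Nat.cast_injective).mono ?_)
    rintro _ ⟨N, rfl⟩
    rw [Set.mem_ofPred_eq, eval_ncPoly_eq_treeSum f h hf hfh, eval_finsetSum, treeSum]
    simp only [eval_mul, eval_C, eval_omegaPoly]
  rw [zero_add, ← range_eq_Ico] at key
  rw [← eval_zero_derivative_ncPoly h (nonempty_range_iff.2 (by omega)), key, derivative_sum,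
    eval_finsetSum]
  simp only [derivative_mul, derivative_C, mul_zero, add_zero, eval_mul, eval_C,
    eval_zero_derivative_omegaPoly]

end SchroderSums

section TreePartition

open PTree

/-- The internal vertices of `t`. -/
noncomputable def internalVertices (t : PTree) : Finset (List ℕ) := (finite_isInternalAt t).toFinset

lemma mem_internalVertices {t : PTree} {v : List ℕ} :
    v ∈ internalVertices t ↔ IsInternalAt t v :=
  Set.Finite.mem_toFinset _

open Classical in
/-- The sectors in `Fin n` owned by the vertex `v` of `t`. -/
noncomputable def sectorBlock (n : ℕ) (t : PTree) (v : List ℕ) : Finset (Fin n) :=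
  univ.filter fun i => OwnsSector t v i

lemma mem_sectorBlock {n : ℕ} {t : PTree} {v : List ℕ} {i : Fin n} :
    i ∈ sectorBlock n t v ↔ OwnsSector t v i := by
  classical
  rw [sectorBlock, mem_filter, and_iff_right (mem_univ i)]

lemma exists_mem_sectorBlock {n : ℕ} {t : PTree} (ht : t ∈ PTree.ST n) {v : List ℕ}
    (hv : IsInternalAt t v) : ∃ i, i ∈ sectorBlock n t v := by
  obtain ⟨i, hi⟩ := exists_sector_of_isInternalAt ht.1 hv
  have h1 := OwnsSector.lt hi
  have h2 := ht.2
  exact ⟨⟨i, by omega⟩, mem_sectorBlock.2 hi⟩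

lemma sectorBlock_injOn {n : ℕ} {t : PTree} (ht : t ∈ PTree.ST n) :
    Set.InjOn (sectorBlock n t) (internalVertices t) := by
  intro v hv w _ heq
  obtain ⟨i, hi⟩ := exists_mem_sectorBlock ht (mem_internalVertices.1 hv)
  exact OwnsSector.unique (mem_sectorBlock.1 hi) (mem_sectorBlock.1 (heq ▸ hi))

/-- The partition of the sectors of a Schröder tree. -/
noncomputable def treePartition {n : ℕ} {t : PTree} (ht : t ∈ PTree.ST n) : NPart n :=
  Finpartition.ofExistsUnique ((internalVertices t).image (sectorBlock n t))
    (fun _ _ => subset_univ _)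
    (fun i _ => by
      have hi : i.val + 2 ≤ numLeaves t := by
        have := ht.2
        omega
      obtain ⟨v, hv⟩ := exists_ownsSector hi
      refine ⟨sectorBlock n t v, ⟨mem_image_of_mem _ (mem_internalVertices.2 hv.1),
        mem_sectorBlock.2 hv⟩, ?_⟩
      rintro _ ⟨hW, hiW⟩
      obtain ⟨w, -, rfl⟩ := mem_image.1 hW
      rw [OwnsSector.unique (mem_sectorBlock.1 hiW) hv])
    (fun h => by
      obtain ⟨v, hv, heq⟩ := mem_image.1 h
      obtain ⟨i, hi⟩ := exists_mem_sectorBlock ht (mem_internalVertices.1 hv)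
      rw [heq] at hi
      exact notMem_empty _ hi)

lemma mem_treePartition {n : ℕ} {t : PTree} (ht : t ∈ PTree.ST n) {V : Finset (Fin n)} :
    V ∈ (treePartition ht).parts ↔ ∃ v, IsInternalAt t v ∧ sectorBlock n t v = V := by
  rw [treePartition, Finpartition.ofExistsUnique_parts, mem_image]
  simp only [mem_internalVertices]

lemma treePartEq_treePartition {n : ℕ} {t : PTree} (ht : t ∈ PTree.ST n) :
    TreePartEq t (treePartition ht) := by
  intro i j
  simp only [mem_treePartition]
  constructor
  · rintro ⟨v, hi, hj⟩
    exact ⟨_, ⟨v, hi.1, rfl⟩, mem_sectorBlock.2 hi, mem_sectorBlock.2 hj⟩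
  · rintro ⟨_, ⟨v, -, rfl⟩, hi, hj⟩
    exact ⟨v, mem_sectorBlock.1 hi, mem_sectorBlock.1 hj⟩

lemma isNoncrossing_treePartition {n : ℕ} {t : PTree} (ht : t ∈ PTree.ST n) :
    IsNoncrossing (treePartition ht) := by
  intro a b c d hab hbc hcd V hV W hW haV hcV hbW hdW
  obtain ⟨v, -, rfl⟩ := (mem_treePartition ht).1 hV
  obtain ⟨w, -, rfl⟩ := (mem_treePartition ht).1 hW
  rw [mem_sectorBlock] at haV hcV hbW hdW
  rw [Fin.lt_def] at hab hbc hcd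
  have hvb : SectorIn t v b := by
    have h1 := haV.2.1
    have h2 := hcV.2.1
    rw [SectorIn] at *
    omega
  have hwc : SectorIn t w c := by
    have h1 := hbW.2.1
    have h2 := hdW.2.1
    rw [SectorIn] at *
    omega
  by_contra hne
  rcases SectorIn.prefix_or hcV.1 hbW.1 hvb hbW.2.1 with hp | hp
  · exact hcV.2.2 w hbW.1 hp (fun h => hne (by rw [h])) hwc
  · exact hbW.2.2 v hcV.1 hp (fun h => hne (by rw [h])) hvb

lemma parts_subset_of_treePartEq {n : ℕ} {t : PTree} {π ρ : NPart n} (hπ : TreePartEq t π)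
    (hρ : TreePartEq t ρ) : π.parts ⊆ ρ.parts := by
  intro V hV
  obtain ⟨i, hi⟩ := π.nonempty_of_mem_parts hV
  obtain ⟨W, hW, hiW⟩ := ρ.exists_mem (mem_univ i)
  have : V = W := by
    ext j
    constructor
    · intro hj
      obtain ⟨W', hW', hi', hj'⟩ := (hρ i j).1 ((hπ i j).2 ⟨V, hV, hi, hj⟩)
      rwa [ρ.eq_of_mem_parts hW hW' hiW hi']
    · intro hj
      obtain ⟨V', hV', hi', hj'⟩ := (hπ i j).1 ((hρ i j).2 ⟨W, hW, hiW, hj⟩)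
      rwa [π.eq_of_mem_parts hV hV' hi hi']
  rwa [this]

lemma treePartEq_iff {n : ℕ} {t : PTree} (ht : t ∈ PTree.ST n) {π : NPart n} :
    TreePartEq t π ↔ π = treePartition ht := by
  refine ⟨fun h => Finpartition.ext ?_, fun h => h ▸ treePartEq_treePartition ht⟩
  exact (parts_subset_of_treePartEq h (treePartEq_treePartition ht)).antisymm
    (parts_subset_of_treePartEq (treePartEq_treePartition ht) h)

/-- Extension of a tuple by the value one. -/
noncomputable def extendOne {A : Type*} [Ring A] {n : ℕ} (a : Fin n → A) (i : ℕ) : A :=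
  if h : i < n then a ⟨i, h⟩ else 1

lemma onPositions_extendOne {A : Type*} [Ring A] {n : ℕ} (f : List A → ℂ) (a : Fin n → A)
    (V : Finset (Fin n)) :
    onPositions f (extendOne a) (V.map Fin.valEmbedding) = f (V.sort.map a) := by
  have h := onPositions_map f (extendOne a) (Fin.valOrderEmb n) V
  have ha : (fun i => extendOne a (Fin.valOrderEmb n i)) = a := by
    funext i
    simp [extendOne]
  rw [ha] at h
  exact h

lemma blockAt_zero_eq {n : ℕ} {t : PTree} (ht : t ∈ PTree.ST n) (v : List ℕ) :
    blockAt 0 t v = (sectorBlock n t v).map Fin.valEmbedding := by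
  ext i
  simp only [mem_blockAt, mem_map, mem_sectorBlock, Nat.zero_le, true_and, Nat.sub_zero,
    Fin.valEmbedding_apply]
  constructor
  · intro h
    have h1 := OwnsSector.lt h
    have h2 := ht.2
    exact ⟨⟨i, by omega⟩, h, rfl⟩
  · rintro ⟨i, h, rfl⟩
    exact h

lemma momApply_treePartition {A : Type*} [Ring A] {n : ℕ} (φ : A → ℂ) (a : Fin n → A) {t : PTree}
    (ht : t ∈ PTree.ST n) :
    momApply φ a (treePartition ht) =
      treePhi (onPositions (fun l => φ l.prod) (extendOne a)) 0 t := by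
  rw [momApply, blockApply, treePartition, Finpartition.ofExistsUnique_parts,
    prod_image (sectorBlock_injOn ht), treePhi,
    finprod_mem_eq_finite_toFinset_prod _ (finite_isInternalAt t)]
  refine prod_congr rfl fun v _ => ?_
  rw [blockAt_zero_eq ht, onPositions_extendOne]

theorem finsum_noncrossing_eq_sum_schroderTrees {n : ℕ} (F : NPart n → ℂ) (G : PTree → ℂ)
    (hFG : ∀ t (ht : t ∈ PTree.ST n), F (treePartition ht) = G t) :
    ∑ᶠ π ∈ {π : NPart n | IsNoncrossing π},
        (∑ᶠ t ∈ {t ∈ PTree.ST n | TreePartEq t π}, omegaSk t) * F π =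
      ∑ t ∈ schroderTrees n, omegaSk t * G t := by
  classical
  have hinner : ∀ π : NPart n, ∑ᶠ t ∈ {t ∈ PTree.ST n | TreePartEq t π}, omegaSk t =
      ∑ t ∈ (schroderTrees n).filter fun t => TreePartEq t π, omegaSk t := by
    intro π
    rw [← finsum_mem_coe_finset]
    congr 1
    funext t
    simp [mem_schroderTrees]
  have hfin : {π : NPart n | IsNoncrossing π}.Finite := Set.toFinite _
  rw [finsum_mem_eq_finite_toFinset_sum _ hfin]
  simp only [hinner, sum_mul]
  rw [sum_comm' (t' := schroderTrees n)
    (s' := fun t => hfin.toFinset.filter fun π => TreePartEq t π)]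
  · refine sum_congr rfl fun t ht => ?_
    have ht' := mem_schroderTrees.1 ht
    have : hfin.toFinset.filter (fun π => TreePartEq t π) = {treePartition ht'} := by
      ext π
      rw [mem_filter, Set.Finite.mem_toFinset, mem_singleton, treePartEq_iff ht',
        and_iff_right_iff_imp]
      rintro rfl
      exact isNoncrossing_treePartition ht'
    rw [this, sum_singleton, hFG t ht']
  · intro π t
    simp only [mem_filter]
    tauto

end TreePartition

end MonotoneNC

/-- Monotone cumulants in terms of moments, grouped by noncrossing
partitions: `h_n(a_1,…,a_n) = Σ_{π ∈ NC(n)} α(π) φ_π(a_1,…,a_n)` where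
`α(π) = Σ_{t ∈ ST(n), π(t) = π} ω(sk(t))`. -/
theorem monotone_cumulants_eq_sum_noncrossing_partitions
    (A : Type*) [Ring A] [Algebra ℂ A] (φ : A →ₗ[ℂ] ℂ) (hφ : φ 1 = 1)
    (h : List A → ℂ) (hmc : MonotoneMC (fun x => φ x) h)
    (n : ℕ) (hn : 1 ≤ n) (a : Fin n → A) :
    h (List.ofFn a) =
      ∑ᶠ π ∈ {π : NPart n | IsNoncrossing π},
        (∑ᶠ t ∈ {t ∈ PTree.ST n | TreePartEq t π}, PTree.omegaSk t) *
          momApply (fun x => φ x) a π := by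
  open MonotoneNC in
  have hφ' : ∀ T, (ncPoly (onPositions h (extendOne a)) T ∅).eval 1 =
      onPositions (fun l => φ l.prod) (extendOne a) T := by
    intro T
    rcases T.eq_empty_or_nonempty with rfl | hT
    · rw [ncPoly_empty, Polynomial.eval_one]
      simp [onPositions, hφ]
    · exact eval_one_ncPoly hmc (extendOne a) hT
  have hrange : h (List.ofFn a) =
      MonotoneNC.onPositions h (MonotoneNC.extendOne a) (Finset.range n) := by
    rw [MonotoneNC.onPositions, Finset.sort_range, List.ofFn_eq_map,
      ← List.map_coe_finRange_eq_range, List.map_map]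
    congr 2
    funext i
    simp [MonotoneNC.extendOne]
  rw [hrange, MonotoneNC.eq_sum_schroderTrees _ _ _ hφ' hn,
    MonotoneNC.finsum_noncrossing_eq_sum_schroderTrees _ _ fun t ht =>
      MonotoneNC.momApply_treePartition (fun x => φ x) a ht]
  simp [MonotoneNC.onPositions, hφ]
end

section
/- Let (A, φ) be a noncommutative probability space with Boolean cumulants {b_n}. Then for every n ≥ 1 and all a_1,…,a_n ∈ A, b_n(a_1,…,a_n) = Σ_{t ∈ BST(n)} (−1)^{i(t)−1} φ_{π(t)}(a_1,…,a_n). -/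
open scoped BigOperators

namespace PTree

/-- The left comb with corollas of `m + 1` leaves, `m` running through the list from the root. -/
def leftComb : List ℕ → PTree
  | [] => leaf
  | m :: ms => node (leftComb ms :: List.replicate m leaf)

theorem leftComb_injective : Function.Injective leftComb := by
  intro l
  induction l with
  | nil => rintro (_ | ⟨m, ms⟩) h <;> simp_all [leftComb]
  | cons m ms ih =>
    rintro (_ | ⟨k, ks⟩) h
    · simp [leftComb] at h
    · simp only [leftComb, node.injEq, List.cons.injEq] at h
      have h2 := congrArg List.length h.2
      simp only [List.length_replicate] at h2
      rw [ih h.1, h2]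

theorem graftLeftmost_leftComb (ms : List ℕ) (m : ℕ) :
    graftLeftmost (leftComb ms) (corolla (m + 1)) = leftComb (ms ++ [m]) := by
  induction ms with
  | nil => simp [leftComb, graftLeftmost, corolla, List.replicate_succ]
  | cons k ks ih => simp [leftComb, graftLeftmost, ih]

theorem isBST_iff (t : PTree) : IsBST t ↔ ∃ ms : List ℕ, (∀ m ∈ ms, 0 < m) ∧ leftComb ms = t := by
  constructor
  · intro h
    induction h with
    | single => exact ⟨[], by simp, rfl⟩
    | graft t m _ hm ih =>
      obtain ⟨ms, hms, rfl⟩ := ih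
      obtain ⟨k, rfl⟩ : ∃ k, m = k + 1 := ⟨m - 1, by omega⟩
      refine ⟨ms ++ [k], ?_, (graftLeftmost_leftComb ms k).symm⟩
      intro x hx
      rcases List.mem_append.1 hx with hx | hx
      · exact hms x hx
      · rw [List.mem_singleton.1 hx]; omega
  · rintro ⟨ms, hms, rfl⟩
    induction ms using List.reverseRecOn with
    | nil => exact IsBST.single
    | append_singleton ks k ih =>
      rw [← graftLeftmost_leftComb]
      refine IsBST.graft _ _ (ih fun m hm => hms m (by simp [hm])) ?_
      have := hms k (by simp)
      omega

theorem isSchroder_leftComb (ms : List ℕ) (hms : ∀ m ∈ ms, 0 < m) : IsSchroder (leftComb ms) := by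
  induction ms with
  | nil => exact IsSchroder.leaf
  | cons m ms ih =>
    have hm := hms m (by simp)
    refine IsSchroder.node _ (by simp; omega) fun c hc => ?_
    rcases List.mem_cons.1 hc with rfl | hc
    · exact ih fun k hk => hms k (by simp [hk])
    · rw [List.eq_of_mem_replicate hc]; exact IsSchroder.leaf

theorem subtreeAt_replicate_leftComb (ms : List ℕ) (j : ℕ) (hj : j ≤ ms.length) :
    subtreeAt (List.replicate j 0) (leftComb ms) = some (leftComb (ms.drop j)) := by
  induction j generalizing ms with
  | zero => simp [subtreeAt]
  | succ j ih =>
    cases ms with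
    | nil => simp at hj
    | cons m ms =>
      simpa [leftComb, List.replicate_succ, subtreeAt] using ih ms (by simpa using hj)

theorem subtreeAt_leaf (p : List ℕ) : subtreeAt p leaf = if p = [] then some leaf else none := by
  cases p <;> simp [subtreeAt]

theorem subtreeAt_cons_succ_leftComb (m : ℕ) (ms : List ℕ) (k : ℕ) (q : List ℕ) :
    subtreeAt ((k + 1) :: q) (leftComb (m :: ms)) =
      if k < m ∧ q = [] then some leaf else none := by
  by_cases hk : k < m <;>
    simp [leftComb, subtreeAt, hk, subtreeAt_leaf]

theorem subtreeAt_cons_zero_leftComb (m : ℕ) (ms : List ℕ) (q : List ℕ) :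
    subtreeAt (0 :: q) (leftComb (m :: ms)) = subtreeAt q (leftComb ms) := by
  simp [leftComb, subtreeAt]

theorem isInternalAt_leftComb (ms : List ℕ) (p : List ℕ) :
    IsInternalAt (leftComb ms) p ↔ ∃ j < ms.length, List.replicate j 0 = p := by
  induction ms generalizing p with
  | nil =>
    simp only [IsInternalAt, leftComb, subtreeAt_leaf]
    split_ifs <;> simp
  | cons m ms ih =>
    rcases p with _ | ⟨_ | k, q⟩
    · simp [IsInternalAt, leftComb, subtreeAt]
    · have : IsInternalAt (leftComb (m :: ms)) (0 :: q) ↔ IsInternalAt (leftComb ms) q := by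
        simp [IsInternalAt, subtreeAt_cons_zero_leftComb]
      rw [this, ih]
      constructor
      · rintro ⟨j, hj, rfl⟩
        exact ⟨j + 1, by simpa using hj, by simp [List.replicate_succ]⟩
      · rintro ⟨_ | j, hj, h⟩
        · simp at h
        · exact ⟨j, by simpa using hj, by simpa [List.replicate_succ] using h⟩
    · constructor
      · rintro ⟨cs, h, hcs⟩
        rw [subtreeAt_cons_succ_leftComb] at h
        split_ifs at h
        simp at h
        exact absurd h hcs
      · rintro ⟨_ | j, hj, h⟩ <;> simp [List.replicate_succ] at h

theorem setOf_isLeafAt_leftComb_cons (m : ℕ) (ms : List ℕ) :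
    {p | IsLeafAt (leftComb (m :: ms)) p} =
      List.cons 0 '' {p | IsLeafAt (leftComb ms) p} ∪
        (fun k => [k + 1]) '' (Finset.range m : Set ℕ) := by
  ext p
  rcases p with _ | ⟨_ | k, q⟩
  · simp [IsLeafAt, leftComb, subtreeAt]
  · simp [IsLeafAt, subtreeAt_cons_zero_leftComb]
  · simp [IsLeafAt, subtreeAt_cons_succ_leftComb]

theorem finite_ncard_isLeafAt_leftComb (ms : List ℕ) :
    {p | IsLeafAt (leftComb ms) p}.Finite ∧
      {p | IsLeafAt (leftComb ms) p}.ncard = ms.sum + 1 := by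
  induction ms with
  | nil =>
    have : {p | IsLeafAt (leftComb []) p} = {[]} := by
      ext p; simp [IsLeafAt, leftComb, subtreeAt_leaf]
    rw [this]; simp
  | cons m ms ih =>
    rw [setOf_isLeafAt_leftComb_cons]
    have hf := (Finset.range m).finite_toSet.image (fun k : ℕ => [k + 1])
    refine ⟨(ih.1.image _).union hf, ?_⟩
    rw [Set.ncard_union_eq _ (ih.1.image _) hf,
      Set.ncard_image_of_injective _ (List.cons_injective),
      Set.ncard_image_of_injective, Set.ncard_coe_finset, ih.2]
    · simp; omega
    · intro a b h; simpa using h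
    · rw [Set.disjoint_left]
      rintro _ ⟨q, _, rfl⟩ ⟨k, _, h⟩
      simp at h

theorem numLeaves_leftComb (ms : List ℕ) : numLeaves (leftComb ms) = ms.sum + 1 :=
  (finite_ncard_isLeafAt_leftComb ms).2

theorem setOf_isInternalAt_leftComb (ms : List ℕ) :
    {p | IsInternalAt (leftComb ms) p} =
      (fun j => List.replicate j 0) '' (Finset.range ms.length : Set ℕ) := by
  ext p
  simp [isInternalAt_leftComb]

theorem replicate_zero_injective : Function.Injective fun j => List.replicate j (0 : ℕ) := by
  intro a b h
  simpa using congrArg List.length h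

theorem numInternal_leftComb (ms : List ℕ) : numInternal (leftComb ms) = ms.length := by
  have : numInternal (leftComb ms) = {p | IsInternalAt (leftComb ms) p}.ncard := rfl
  rw [this, setOf_isInternalAt_leftComb, Set.ncard_image_of_injective _ replicate_zero_injective,
    Set.ncard_coe_finset, Finset.card_range]

theorem eq_replicate_of_lex_replicate_zero {q : List ℕ} {j : ℕ}
    (h : List.Lex (· < ·) q (List.replicate j 0)) : ∃ i < j, q = List.replicate i 0 := by
  induction j generalizing q with
  | zero => simp at h
  | succ j ih =>
    rw [List.replicate_succ] at h
    cases h with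
    | nil => exact ⟨0, by omega, rfl⟩
    | rel h => simp at h
    | cons h =>
      obtain ⟨i, hi, rfl⟩ := ih h
      exact ⟨i + 1, by omega, by simp [List.replicate_succ]⟩

theorem leavesBefore_leftComb (ms : List ℕ) (j : ℕ) (hj : j < ms.length) :
    leavesBefore (leftComb ms) (List.replicate j 0) = 0 := by
  rw [leavesBefore, Nat.card_eq_zero]
  left
  refine ⟨fun ⟨q, hq, hlex, _⟩ => ?_⟩
  obtain ⟨i, hi, rfl⟩ := eq_replicate_of_lex_replicate_zero hlex
  obtain ⟨cs, h, hcs⟩ := (isInternalAt_leftComb ms _).2 ⟨i, by omega, rfl⟩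
  rw [IsLeafAt, h] at hq
  simp at hq
  exact hcs hq

theorem sectorIn_leftComb (ms : List ℕ) (j : ℕ) (hj : j < ms.length) (i : ℕ) :
    SectorIn (leftComb ms) (List.replicate j 0) i ↔ i < (ms.drop j).sum := by
  rw [SectorIn, leavesBefore_leftComb ms j hj, subtree!, subtreeAt_replicate_leftComb ms j hj.le,
    Option.getD_some, numLeaves_leftComb]
  omega

theorem sum_drop_antitone (ms : List ℕ) {j k : ℕ} (h : j ≤ k) :
    (ms.drop k).sum ≤ (ms.drop j).sum := by
  obtain ⟨d, rfl⟩ := Nat.exists_eq_add_of_le h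
  rw [← List.drop_drop]
  exact (List.drop_sublist _ _).sum_le_sum (by simp)

theorem ownsSector_leftComb (ms : List ℕ) (j : ℕ) (hj : j < ms.length) (i : ℕ) :
    OwnsSector (leftComb ms) (List.replicate j 0) i ↔
      (ms.drop (j + 1)).sum ≤ i ∧ i < (ms.drop j).sum := by
  rw [OwnsSector, sectorIn_leftComb ms j hj, isInternalAt_leftComb]
  constructor
  · rintro ⟨_, h, hw⟩
    refine ⟨?_, h⟩
    by_cases hj' : j + 1 < ms.length
    · have := hw (List.replicate (j + 1) 0) ((isInternalAt_leftComb _ _).2 ⟨_, hj', rfl⟩)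
        ⟨[0], by simp [List.replicate_succ']⟩ (fun h => by simpa using congrArg List.length h)
      rw [sectorIn_leftComb ms _ hj'] at this
      omega
    · rw [List.drop_of_length_le (by omega)]; simp
  · rintro ⟨h1, h2⟩
    refine ⟨⟨j, hj, rfl⟩, h2, fun w hw hp hne => ?_⟩
    obtain ⟨k, hk, rfl⟩ := (isInternalAt_leftComb _ _).1 hw
    rw [sectorIn_leftComb ms k hk]
    have hle : j ≤ k := by simpa using hp.length_le
    have : j ≠ k := by rintro rfl; exact hne rfl
    have := sum_drop_antitone ms (show j + 1 ≤ k by omega)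
    omega

theorem filter_range_eq_drop_range {n p q : ℕ} (hpq : p ≤ q) (hq : q ≤ n)
    (P : ℕ → Prop) [DecidablePred P] (hP : ∀ i, P i ↔ p ≤ i ∧ i < q) :
    ((List.range n).filter fun i => P i) = (List.range q).drop p := by
  obtain ⟨d, rfl⟩ := Nat.exists_eq_add_of_le hpq
  obtain ⟨e, rfl⟩ := Nat.exists_eq_add_of_le hq
  rw [List.range_add, List.range_add, List.filter_append, List.filter_append,
    List.filter_eq_nil_iff.2, List.filter_eq_self.2, List.filter_eq_nil_iff.2,
    List.drop_left' (by simp)]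
  · simp
  all_goals simp +contextual [hP]

theorem map_getD_filter_range {A : Type*} [Zero A] (l : List A) {p q : ℕ} (hpq : p ≤ q)
    (hq : q ≤ l.length) (P : ℕ → Prop) [DecidablePred P] (hP : ∀ i, P i ↔ p ≤ i ∧ i < q) :
    (((List.range l.length).filter fun i => P i).map fun i => l.getD i 0) =
      (l.take q).drop p := by
  rw [filter_range_eq_drop_range hpq hq P hP, List.map_drop]
  congr 1
  refine List.ext_getElem (by simpa using hq) fun i h1 h2 => ?_
  have : i < l.length := by simp at h2; omega
  simp [this]

theorem phiPi_leftComb {A : Type*} [Ring A] (φ : A → ℂ) (ms : List ℕ) (l : List A)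
    (hl : l.length = ms.sum) :
    phiPi φ (leftComb ms) l = ∏ j ∈ Finset.range ms.length,
      φ ((l.take (ms.drop j).sum).drop (ms.drop (j + 1)).sum).prod := by
  classical
  rw [phiPi, setOf_isInternalAt_leftComb, finprod_mem_image replicate_zero_injective.injOn,
    finprod_mem_coe_finset]
  refine Finset.prod_congr rfl fun j hj => ?_
  rw [map_getD_filter_range l (sum_drop_antitone ms j.le_succ) _ _
    (ownsSector_leftComb ms j (Finset.mem_range.1 hj))]
  rw [hl]
  simpa using sum_drop_antitone ms (Nat.zero_le j)

theorem phiPi_leftComb_cons {A : Type*} [Ring A] (φ : A → ℂ) (m : ℕ) (ms : List ℕ) (l : List A)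
    (hl : l.length = m + ms.sum) :
    phiPi φ (leftComb (m :: ms)) l =
      phiPi φ (leftComb ms) (l.take ms.sum) * φ (l.drop ms.sum).prod := by
  rw [phiPi_leftComb φ (m :: ms) l (by simpa using hl),
    phiPi_leftComb φ ms _ (by rw [List.length_take]; omega), List.length_cons,
    Finset.prod_range_succ']
  congr 1
  · refine Finset.prod_congr rfl fun j hj => ?_
    have := sum_drop_antitone ms (Nat.zero_le j)
    simp only [List.drop_zero] at this
    simp [List.take_take, this]
  · rw [List.take_of_length_le (by simp; omega)]
    simp

end PTree

namespace PTree

/-- Lists of positive integers with sum `n`. -/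
def positiveLists (n : ℕ) : Set (List ℕ) := {ms | (∀ m ∈ ms, 0 < m) ∧ ms.sum = n}

theorem positiveLists_zero : positiveLists 0 = {[]} := by
  ext ms
  constructor
  · rintro ⟨h1, h2⟩
    cases ms with
    | nil => rfl
    | cons m ms =>
      have := h1 m (by simp)
      simp at h2
      omega
  · rintro rfl
    simp [positiveLists]

theorem positiveLists_eq_biUnion {n : ℕ} (hn : 0 < n) :
    positiveLists n =
      ⋃ k ∈ (Finset.range n : Set ℕ), List.cons (n - k) '' positiveLists k := by
  ext ms
  simp only [Set.mem_iUnion, Finset.coe_range, Set.mem_Iio, exists_prop]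
  constructor
  · rintro ⟨h1, h2⟩
    cases ms with
    | nil => simp at h2; omega
    | cons m ms =>
      have := h1 m (by simp)
      rw [List.sum_cons] at h2
      refine ⟨ms.sum, by omega, ms, ⟨fun x hx => h1 x (by simp [hx]), rfl⟩, ?_⟩
      congr 1; omega
  · rintro ⟨k, hk, ms, ⟨h1, h2⟩, rfl⟩
    refine ⟨fun x hx => ?_, by rw [List.sum_cons]; omega⟩
    rcases List.mem_cons.1 hx with rfl | hx
    · omega
    · exact h1 x hx

theorem finite_positiveLists (n : ℕ) : (positiveLists n).Finite := by
  induction n using Nat.strong_induction_on with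
  | _ n ih =>
    rcases Nat.eq_zero_or_pos n with rfl | hn
    · rw [positiveLists_zero]; exact Set.finite_singleton _
    · rw [positiveLists_eq_biUnion hn]
      exact (Finset.range n).finite_toSet.biUnion fun k hk => (ih k (by simpa using hk)).image _

theorem setOf_isBST_inter_ST (n : ℕ) :
    {t | IsBST t ∧ t ∈ ST n} = leftComb '' positiveLists n := by
  ext t
  constructor
  · rintro ⟨h1, h2, h3⟩
    obtain ⟨ms, hms, rfl⟩ := (isBST_iff t).1 h1
    rw [numLeaves_leftComb] at h3
    exact ⟨ms, ⟨hms, by omega⟩, rfl⟩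
  · rintro ⟨ms, ⟨h1, h2⟩, rfl⟩
    exact ⟨(isBST_iff _).2 ⟨ms, h1, rfl⟩, isSchroder_leftComb ms h1, by
      rw [numLeaves_leftComb, h2]⟩

/-- The alternating sum of `φ_{π(t)}` over the left combs with `l.length` sectors. -/
noncomputable def combSum {A : Type*} [Ring A] (φ : A → ℂ) (l : List A) : ℂ :=
  ∑ᶠ ms ∈ positiveLists l.length, (-1 : ℂ) ^ ms.length * phiPi φ (leftComb ms) l

theorem combSum_nil {A : Type*} [Ring A] (φ : A → ℂ) : combSum φ [] = 1 := by
  rw [combSum, List.length_nil, positiveLists_zero, finsum_mem_singleton,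
    phiPi_leftComb _ _ _ rfl]
  simp

theorem combSum_eq_neg_sum {A : Type*} [Ring A] (φ : A → ℂ) (l : List A) (hl : 0 < l.length) :
    combSum φ l =
      -∑ k ∈ Finset.range l.length, combSum φ (l.take k) * φ (l.drop k).prod := by
  rw [combSum, positiveLists_eq_biUnion hl, finsum_mem_biUnion _ (Finset.finite_toSet _)
    fun k _ => (finite_positiveLists k).image _, finsum_mem_coe_finset, ← Finset.sum_neg_distrib]
  · refine Finset.sum_congr rfl fun k hk => ?_
    have hk := Finset.mem_range.1 hk
    rw [finsum_mem_image List.cons_injective.injOn, combSum, List.length_take,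
      min_eq_left hk.le, ← mul_neg,
      finsum_mem_mul' _ _ (finite_positiveLists k)]
    refine finsum_mem_congr rfl fun ms hms => ?_
    rw [phiPi_leftComb_cons _ _ _ _ (by rw [hms.2]; omega), hms.2, List.length_cons]
    ring
  · intro j hj k hk hjk
    rw [Function.onFun, Set.disjoint_left]
    rintro _ ⟨ms, _, rfl⟩ ⟨ms', _, h⟩
    simp only [List.cons.injEq] at h
    simp at hj hk
    omega

theorem finsum_BST_eq_neg_combSum {A : Type*} [Ring A] (φ : A → ℂ) (l : List A)
    (hl : 0 < l.length) :
    ∑ᶠ t ∈ {t | IsBST t ∧ t ∈ ST l.length}, (-1 : ℂ) ^ (numInternal t - 1) * phiPi φ t l =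
      -combSum φ l := by
  rw [setOf_isBST_inter_ST, finsum_mem_image leftComb_injective.injOn, combSum,
    ← finsum_mem_neg_distrib _ (finite_positiveLists _)]
  refine finsum_mem_congr rfl fun ms hms => ?_
  rw [numInternal_leftComb]
  cases ms with
  | nil => have := hms.2; simp at this; omega
  | cons m ms => simp [pow_succ]

end PTree

section IntervalPartitions

/-- The partition of `Fin (k + m)` with first block the first `k` elements, followed by the
translates of the blocks of `σ`. -/
def consBlock (k : ℕ) {m : ℕ} (hk : 0 < k) (σ : NPart m) : NPart (k + m) :=
  Finpartition.ofExistsUnique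
    (insert (Finset.univ.map (Fin.castAddEmb m)) (σ.parts.image fun V => V.map (Fin.natAddEmb k)))
    (fun _ _ => Finset.subset_univ _)
    (by
      intro x _
      induction x using Fin.addCases with
      | left i =>
        refine ⟨_, ⟨Finset.mem_insert_self _ _, by simp⟩, ?_⟩
        rintro V ⟨hV, hi⟩
        rcases Finset.mem_insert.1 hV with rfl | hV
        · rfl
        · obtain ⟨W, _, rfl⟩ := Finset.mem_image.1 hV
          obtain ⟨j, _, hj⟩ := Finset.mem_map.1 hi
          have := congrArg Fin.val hj
          simp at this
          omega
      | right j =>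
        have hj : Fin.natAdd k j ∉ Finset.univ.map (Fin.castAddEmb m) := by
          simp only [Finset.mem_map, Finset.mem_univ, true_and, not_exists]
          intro i hi
          have := congrArg Fin.val hi
          simp at this
          omega
        obtain ⟨W, hW, hjW⟩ := σ.exists_mem (Finset.mem_univ j)
        refine ⟨W.map (Fin.natAddEmb k), ⟨by simp [hW], by simpa using hjW⟩, ?_⟩
        rintro V ⟨hV, hjV⟩
        rcases Finset.mem_insert.1 hV with rfl | hV
        · exact absurd hjV hj
        · obtain ⟨W', hW', rfl⟩ := Finset.mem_image.1 hV
          rw [σ.eq_of_mem_parts hW hW' hjW (by simpa using hjV)])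
    (by
      simp only [Finset.mem_insert, Finset.mem_image, not_or, not_exists, not_and]
      refine ⟨fun h => ?_, fun V hV h => ?_⟩
      · have := congrArg Finset.card h
        simp at this
        omega
      · rw [Finset.map_eq_empty] at h
        exact σ.ne_bot hV h)

theorem consBlock_parts (k : ℕ) {m : ℕ} (hk : 0 < k) (σ : NPart m) :
    (consBlock k hk σ).parts =
      insert (Finset.univ.map (Fin.castAddEmb m))
        (σ.parts.image fun V => V.map (Fin.natAddEmb k)) := rfl

theorem castAdd_univ_ne_map_natAdd {k m : ℕ} (hk : 0 < k) (V : Finset (Fin m)) :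
    V.map (Fin.natAddEmb k) ≠ Finset.univ.map (Fin.castAddEmb m) := by
  intro h
  have : Fin.castAddEmb m ⟨0, hk⟩ ∈ V.map (Fin.natAddEmb k) := by
    rw [h]; exact Finset.mem_map_of_mem _ (Finset.mem_univ _)
  obtain ⟨j, _, hj⟩ := Finset.mem_map.1 this
  have := congrArg Fin.val hj
  simp at this
  omega

theorem blockApply_consBlock {A : Type*} (f : List A → ℂ) {k m : ℕ} (hk : 0 < k) (σ : NPart m)
    (a : Fin (k + m) → A) :
    blockApply f a (consBlock k hk σ) =
      f (List.ofFn fun i => a (Fin.castAdd m i)) *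
        blockApply f (fun i => a (Fin.natAdd k i)) σ := by
  rw [blockApply, consBlock_parts, Finset.prod_insert, Finset.prod_image, blockApply]
  · congr 1
    · rw [← StrictMonoOn.map_finsetSort (f := Fin.castAddEmb m)
        _ ((Fin.strictMono_castAdd m).strictMonoOn _), Fin.sort_univ, List.map_map,
        List.ofFn_eq_map]
      rfl
    · refine Finset.prod_congr rfl fun V _ => ?_
      rw [← StrictMonoOn.map_finsetSort (f := Fin.natAddEmb k)
        _ ((Fin.strictMono_natAdd k).strictMonoOn _), List.map_map]
      rfl
  · exact (Finset.map_injective _).injOn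
  · simp only [Finset.mem_image, not_exists, not_and]
    exact fun V _ => castAdd_univ_ne_map_natAdd hk V

theorem consBlock_injective {k m : ℕ} (hk : 0 < k) :
    Function.Injective (consBlock k hk : NPart m → NPart (k + m)) := by
  intro σ τ h
  have h := congrArg Finpartition.parts h
  rw [consBlock_parts, consBlock_parts] at h
  have hnot : ∀ ρ : NPart m, Finset.univ.map (Fin.castAddEmb m) ∉
      ρ.parts.image fun V => V.map (Fin.natAddEmb k) := by
    simp only [Finset.mem_image, not_exists, not_and]
    exact fun ρ V _ => castAdd_univ_ne_map_natAdd hk V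
  have h := congrArg (fun s => s.erase (Finset.univ.map (Fin.castAddEmb m))) h
  simp only [Finset.erase_insert (hnot _)] at h
  exact Finpartition.ext (Finset.image_injective (Finset.map_injective _) h)

theorem isIntervalPart_consBlock_iff {k m : ℕ} (hk : 0 < k) (σ : NPart m) :
    IsIntervalPart (consBlock k hk σ) ↔ IsIntervalPart σ := by
  constructor
  · intro h V hV x hx y hy z hxz hzy
    have := h (V.map (Fin.natAddEmb k)) (by rw [consBlock_parts]; simp [hV])
      (Fin.natAdd k x) (by simpa using hx) (Fin.natAdd k y) (by simpa using hy) (Fin.natAdd k z)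
      (by simpa using hxz) (by simpa using hzy)
    simpa using this
  · intro h V hV x hx y hy z hxz hzy
    rw [consBlock_parts, Finset.mem_insert, Finset.mem_image] at hV
    rcases hV with rfl | ⟨V, hV, rfl⟩
    · obtain ⟨i, _, rfl⟩ := Finset.mem_map.1 hy
      have : z.val < k := lt_of_le_of_lt (Fin.le_def.1 hzy) (by simp)
      exact Finset.mem_map.2 ⟨⟨z, this⟩, Finset.mem_univ _, rfl⟩
    · obtain ⟨i, hi, rfl⟩ := Finset.mem_map.1 hx
      obtain ⟨j, hj, rfl⟩ := Finset.mem_map.1 hy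
      induction z using Fin.addCases with
      | left z =>
        have := Fin.le_def.1 hxz
        simp at this
        omega
      | right z =>
        have := h V hV i hi j hj z (by simpa using hxz) (by simpa using hzy)
        simpa using this

theorem exists_consBlock_eq {k m : ℕ} (hk : 0 < k) (π : NPart (k + m))
    (hπ : Finset.univ.map (Fin.castAddEmb m) ∈ π.parts) : ∃ σ, consBlock k hk σ = π := by
  classical
  set F : Finset (Fin (k + m)) := Finset.univ.map (Fin.castAddEmb m) with hF
  have hmap : ∀ W ∈ π.parts, W ≠ F →
      (Finset.univ.filter fun j => Fin.natAdd k j ∈ W).map (Fin.natAddEmb k) = W := by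
    intro W hW hWF
    ext x
    induction x using Fin.addCases with
    | left i =>
      have h1 : Fin.castAdd m i ∉ W := fun hi =>
        hWF (π.eq_of_mem_parts hW hπ hi (by simp [hF]))
      simp only [h1, iff_false, Finset.mem_map, not_exists, not_and]
      intro j _ hj
      have := congrArg Fin.val hj
      simp at this
      omega
    | right j => simp
  refine ⟨Finpartition.ofExistsUnique
    ((π.parts.erase F).image fun W => Finset.univ.filter fun j => Fin.natAdd k j ∈ W)
    (fun _ _ => Finset.subset_univ _) ?_ ?_, ?_⟩
  · intro j _
    obtain ⟨W, hW, hj⟩ := π.exists_mem (Finset.mem_univ (Fin.natAdd k j))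
    have hWF : W ≠ F := by
      rintro rfl
      obtain ⟨i, _, hi⟩ := Finset.mem_map.1 hj
      have := congrArg Fin.val hi
      simp at this
      omega
    refine ⟨_, ⟨Finset.mem_image_of_mem _ (Finset.mem_erase.2 ⟨hWF, hW⟩), by simpa using hj⟩, ?_⟩
    rintro V ⟨hV, hjV⟩
    obtain ⟨W', hW', rfl⟩ := Finset.mem_image.1 hV
    rw [π.eq_of_mem_parts hW (Finset.mem_erase.1 hW').2 hj (by simpa using hjV)]
  · intro h
    obtain ⟨W, hW, h⟩ := Finset.mem_image.1 h
    have hW := Finset.mem_erase.1 hW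
    have := hmap W hW.2 hW.1
    rw [h, Finset.map_empty] at this
    exact π.ne_bot hW.2 this.symm
  · apply Finpartition.ext
    rw [consBlock_parts, Finpartition.ofExistsUnique_parts, Finset.image_image,
      Finset.image_congr (g := id), Finset.image_id, Finset.insert_erase hπ]
    intro W hW
    have hW := Finset.mem_erase.1 hW
    exact hmap W hW.2 hW.1

theorem setOf_isIntervalPart_firstBlock {k m : ℕ} (hk : 0 < k) :
    {π : NPart (k + m) | IsIntervalPart π ∧ Finset.univ.filter (fun x => x.val < k) ∈ π.parts} =
      consBlock k hk '' {σ : NPart m | IsIntervalPart σ} := by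
  have hF : Finset.univ.filter (fun x : Fin (k + m) => x.val < k) =
      Finset.univ.map (Fin.castAddEmb m) := by
    ext x
    induction x using Fin.addCases with
    | left i => simp
    | right j =>
      simp only [Finset.mem_filter, Finset.mem_map, Finset.mem_univ, true_and, Fin.val_natAdd]
      refine ⟨fun h => by omega, ?_⟩
      rintro ⟨i, hi⟩
      have := congrArg Fin.val hi
      simp at this
      omega
  rw [hF]
  ext π
  constructor
  · rintro ⟨h1, h2⟩
    obtain ⟨σ, rfl⟩ := exists_consBlock_eq hk π h2
    exact ⟨σ, (isIntervalPart_consBlock_iff hk σ).1 h1, rfl⟩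
  · rintro ⟨σ, h, rfl⟩
    exact ⟨(isIntervalPart_consBlock_iff hk σ).2 h, by rw [consBlock_parts]; simp⟩

theorem setOf_isIntervalPart_eq_biUnion {n : ℕ} (hn : 0 < n) :
    {π : NPart n | IsIntervalPart π} =
      ⋃ k ∈ (Finset.Icc 1 n : Set ℕ),
        {π : NPart n | IsIntervalPart π ∧ Finset.univ.filter (fun x => x.val < k) ∈ π.parts} := by
  ext π
  simp only [Set.mem_iUnion, Set.mem_ofPred_eq, exists_prop]
  constructor
  · intro h
    obtain ⟨V, hV, h0⟩ := π.exists_mem (Finset.mem_univ (⟨0, hn⟩ : Fin n))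
    have hne : V.Nonempty := ⟨_, h0⟩
    refine ⟨(V.max' hne).val + 1, by simp, h, ?_⟩
    convert hV
    ext x
    simp only [Finset.mem_filter, Finset.mem_univ, true_and]
    constructor
    · intro hx
      exact h V hV _ h0 _ (V.max'_mem hne) x (Fin.le_def.2 (Nat.zero_le _))
        (Fin.le_def.2 (by omega))
    · intro hx
      have := Fin.le_def.1 (V.le_max' x hx)
      omega
  · rintro ⟨k, _, h, _⟩
    exact h

theorem finsum_isIntervalPart_eq_sum {A : Type*} (f : List A → ℂ) {n : ℕ} (hn : 0 < n)
    (a : Fin n → A) :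
    ∑ᶠ π ∈ {π : NPart n | IsIntervalPart π}, blockApply f a π =
      ∑ k ∈ Finset.Icc 1 n, ∑ᶠ π ∈ {π : NPart n | IsIntervalPart π ∧
        Finset.univ.filter (fun x => x.val < k) ∈ π.parts}, blockApply f a π := by
  rw [setOf_isIntervalPart_eq_biUnion hn, finsum_mem_biUnion _ (Finset.finite_toSet _)
    fun k _ => Set.toFinite _, finsum_mem_coe_finset]
  intro j hj k hk hjk
  rw [Function.onFun, Set.disjoint_left]
  rintro π ⟨_, h1⟩ ⟨_, h2⟩
  simp only [Finset.coe_Icc, Set.mem_Icc] at hj hk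
  have h := π.eq_of_mem_parts h1 h2 (a := ⟨0, hn⟩) (by simp; omega) (by simp; omega)
  apply hjk
  rw [Finset.ext_iff] at h
  have hlt : ∀ x, x < n → (x < j ↔ x < k) := fun x hx => by simpa using h ⟨x, hx⟩
  have := hlt (j - 1) (by omega)
  have := hlt (k - 1) (by omega)
  omega

theorem finsum_isIntervalPart_firstBlock {A : Type*} (f : List A → ℂ) {k m : ℕ} (hk : 0 < k)
    (a : Fin (k + m) → A) :
    ∑ᶠ π ∈ {π : NPart (k + m) | IsIntervalPart π ∧
        Finset.univ.filter (fun x => x.val < k) ∈ π.parts}, blockApply f a π =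
      f (List.ofFn fun i => a (Fin.castAdd m i)) *
        ∑ᶠ σ ∈ {σ : NPart m | IsIntervalPart σ}, blockApply f (fun i => a (Fin.natAdd k i)) σ := by
  rw [setOf_isIntervalPart_firstBlock hk, finsum_mem_image (consBlock_injective hk).injOn,
    mul_finsum_mem' _ _ (Set.toFinite _)]
  exact finsum_mem_congr rfl fun σ _ => blockApply_consBlock f hk σ a

theorem finsum_isIntervalPart_zero {A : Type*} (f : List A → ℂ) (a : Fin 0 → A) :
    ∑ᶠ σ ∈ {σ : NPart 0 | IsIntervalPart σ}, blockApply f a σ = 1 := by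
  have hparts : ∀ σ : NPart 0, σ.parts = ∅ := fun σ =>
    Finset.eq_empty_of_forall_notMem fun V hV =>
      σ.ne_bot hV (Finset.eq_empty_of_forall_notMem fun x => x.elim0)
  have : {σ : NPart 0 | IsIntervalPart σ} = {⊥} := by
    ext σ
    simp only [Set.mem_ofPred_eq, Set.mem_singleton_iff]
    exact ⟨fun _ => Finpartition.ext (by rw [hparts, hparts]), fun _ V hV => by
      simp [hparts] at hV⟩
  rw [this, finsum_mem_singleton, blockApply, hparts, Finset.prod_empty]

/-- The moment–Boolean cumulant relation, split along the first block. -/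
theorem BooleanMC.eq_sum_take_drop {A : Type*} [Ring A] {φ : A → ℂ} {b : List A → ℂ}
    (hmc : BooleanMC φ b) (hφ : φ 1 = 1) (l : List A) (hl : 0 < l.length) :
    φ l.prod = ∑ k ∈ Finset.Icc 1 l.length, b (l.take k) * φ (l.drop k).prod := by
  obtain ⟨n, a, rfl⟩ : ∃ n, ∃ a : Fin n → A, l = List.ofFn a := ⟨_, l.get, by simp⟩
  rw [List.length_ofFn] at hl ⊢
  rw [hmc n hl a, finsum_isIntervalPart_eq_sum b hl a]
  refine Finset.sum_congr rfl fun k hk => ?_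
  obtain ⟨hk1, hk2⟩ := Finset.mem_Icc.1 hk
  obtain ⟨m, rfl⟩ := Nat.exists_eq_add_of_le hk2
  rw [finsum_isIntervalPart_firstBlock b hk1 a, List.ofFn_add,
    List.take_left' (by simp), List.drop_left' (by simp)]
  congr 1
  rcases Nat.eq_zero_or_pos m with rfl | hm
  · rw [finsum_isIntervalPart_zero]
    simp [hφ]
  · rw [← hmc m hm]

end IntervalPartitions

/-- Boolean cumulants are the alternating sums over left combs. -/
theorem BooleanMC.eq_neg_combSum {A : Type*} [Ring A] {φ : A → ℂ} {b : List A → ℂ}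
    (hmc : BooleanMC φ b) (hφ : φ 1 = 1) (l : List A) (hl : 0 < l.length) :
    b l = -PTree.combSum φ l := by
  induction h : l.length using Nat.strong_induction_on generalizing l with
  | _ n ih =>
    obtain ⟨n, rfl⟩ : ∃ k, n = k + 1 := ⟨n - 1, by omega⟩
    have key := hmc.eq_sum_take_drop hφ l hl
    rw [PTree.combSum_eq_neg_sum φ l hl, neg_neg]
    rw [h] at key ⊢
    rw [Finset.sum_Icc_succ_top (by omega), ← h, List.take_length, List.drop_length,
      List.prod_nil, hφ, mul_one] at key
    rw [Finset.range_eq_Ico, Finset.sum_eq_sum_Ico_succ_bot (by omega), List.take_zero,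
      PTree.combSum_nil, List.drop_zero, one_mul, key]
    have : ∑ k ∈ Finset.Icc 1 n, b (l.take k) * φ (l.drop k).prod =
        -∑ k ∈ Finset.Ico (0 + 1) (n + 1), PTree.combSum φ (l.take k) * φ (l.drop k).prod := by
      rw [← Finset.sum_neg_distrib]
      refine Finset.sum_congr rfl fun k hk => ?_
      have hk := Finset.mem_Ico.1 hk
      have hlen : (l.take k).length = k := by rw [List.length_take]; omega
      rw [ih k hk.2 _ (by omega) hlen, neg_mul]
    rw [this]
    ring

/-- Boolean cumulants in terms of moments indexed by the Schröder trees
in `BST(n)`: `b_n(a_1,…,a_n) = Σ_{t ∈ BST(n)} (−1)^{i(t)−1} φ_{π(t)}(a_1,…,a_n)`. -/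
theorem boolean_cumulants_eq_sum_BST_trees
    (A : Type*) [Ring A] [Algebra ℂ A] (φ : A →ₗ[ℂ] ℂ) (hφ : φ 1 = 1)
    (b : List A → ℂ) (hmc : BooleanMC (fun x => φ x) b)
    (n : ℕ) (hn : 1 ≤ n) (a : Fin n → A) :
    b (List.ofFn a) =
      ∑ᶠ t ∈ {t | PTree.IsBST t ∧ t ∈ PTree.ST n},
        (-1 : ℂ) ^ (PTree.numInternal t - 1) * PTree.phiPi (fun x => φ x) t (List.ofFn a) := by
  have hl : (List.ofFn a).length = n := List.length_ofFn
  rw [hmc.eq_neg_combSum hφ _ (by omega), ← PTree.finsum_BST_eq_neg_combSum _ _ (by omega), hl]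
end
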